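/- Let Ω ⊆ D(0, r) be open with 0 a non-isolated boundary point, Γ = ∂Ω ∩ D(0, r), and let F be holomorphic on a neighborhood of 0 and S holomorphic on Ω, continuous and bounded on Ω ∪ Γ, with S(ζ) = conj(ζ)·F(ζ) for all ζ ∈ Γ. Define f = S/F on (Ω ∪ Γ) ∩ D(0, δ) \ {0} and f(0) = 0, where δ > 0 is small enough that F has no zeros in the punctured closed disk of radius δ. Then f is a Schwarz function of Ω ∪ Γ on D(0, δ): holomorphic on Ω ∩ D(0, δ), continuous on (Ω ∪ Γ) ∩ D(0, δ), and f(ζ) = conj(ζ) on Γ ∩ D(0, δ). -/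

import Mathlib

open Complex Metric Set

local notation "conj'" => starRingEnd ℂ

open MeasureTheory Filter Topology Asymptotics

/-!
Extend `S / F` from `Ω` by conjugation. On a punctured disc around the boundary point `a` the
extension `f` is continuous, and holomorphic off the closed set where `f = z̄`. As in Radó's
theorem, `∂f/∂z̄` is then, in the weak sense, the indicator function `v` of that set: an energy
estimate bounds `f'` in `L²`, so the error of testing against a truncation of `f - z̄` tends to `0`.
Consequently the sum of `π f` and the Cauchy transform `∫ v w / (w - z)` of `v` is holomorphic off
`a`. Multiplied by `F` it is bounded near `a`, so it is meromorphic at `a`. It has no pole there,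
being bounded along the set `f = z̄`, which accumulates at `a`; since Cauchy transforms of bounded
functions are continuous, `f` has a limit at `a`, and the boundary values show that it is `conj a`.
-/

/-- The Wirtinger derivative `∂f/∂z̄`. It takes a junk value where `f` is not real
differentiable. -/
noncomputable def dbar (f : ℂ → ℂ) (z : ℂ) : ℂ :=
  (fderiv ℝ f z 1 + I * fderiv ℝ f z I) / 2

section Dbar

variable {f g : ℂ → ℂ} {z : ℂ}

lemma dbar_congr (h : f =ᶠ[𝓝 z] g) : dbar f z = dbar g z := by
  simp only [dbar, h.fderiv_eq]

lemma dbar_const (c : ℂ) : dbar (fun _ => c) z = 0 := by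
  simp [dbar]

lemma dbar_sub (hf : DifferentiableAt ℝ f z) (hg : DifferentiableAt ℝ g z) :
    dbar (fun w => f w - g w) z = dbar f z - dbar g z := by
  simp only [dbar, fderiv_fun_sub hf hg, sub_apply]
  ring

lemma dbar_mul (hf : DifferentiableAt ℝ f z) (hg : DifferentiableAt ℝ g z) :
    dbar (fun w => f w * g w) z = dbar f z * g z + f z * dbar g z := by
  simp only [dbar, fderiv_fun_mul hf hg, add_apply,
    smul_apply, smul_eq_mul]
  ring

lemma dbar_eq_zero (hf : DifferentiableAt ℂ f z) : dbar f z = 0 := by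
  rw [dbar, hf.fderiv_restrictScalars ℝ]
  simp only [ContinuousLinearMap.coe_restrictScalars', ← toSpanSingleton_deriv,
    ContinuousLinearMap.toSpanSingleton_apply, smul_eq_mul, one_mul]
  linear_combination deriv f z / 2 * I_mul_I

lemma dbar_conj_comp (hf : DifferentiableAt ℂ f z) :
    dbar (fun w => conj' (f w)) z = conj' (deriv f z) := by
  have h : HasFDerivAt (fun w => conj' (f w))
      ((conjCLE : ℂ →L[ℝ] ℂ).comp ((fderiv ℂ f z).restrictScalars ℝ)) z :=
    (conjCLE : ℂ →L[ℝ] ℂ).hasFDerivAt.comp z (hf.hasFDerivAt.restrictScalars ℝ)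
  simp only [dbar, h.fderiv, ContinuousLinearMap.comp_apply,
    ContinuousLinearMap.coe_restrictScalars', ← toSpanSingleton_deriv,
    ContinuousLinearMap.toSpanSingleton_apply, smul_eq_mul, ContinuousLinearEquiv.coe_coe,
    conjCLE_apply, map_mul, map_one, conj_I]
  linear_combination -conj' (deriv f z) / 2 * I_mul_I

lemma dbar_conj : dbar conj' z = 1 := by
  simpa using dbar_conj_comp (differentiableAt_id (𝕜 := ℂ) (x := z))

lemma dbar_ofReal_comp {m : ℝ → ℝ} {u : ℂ → ℝ} (hm : DifferentiableAt ℝ m (u z))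
    (hu : DifferentiableAt ℝ u z) :
    dbar (fun w => (m (u w) : ℂ)) z = deriv m (u z) * dbar (fun w => (u w : ℂ)) z := by
  have hmu := ofRealCLM.hasFDerivAt.comp z (hm.hasDerivAt.comp_hasFDerivAt z hu.hasFDerivAt)
  have hu' := ofRealCLM.hasFDerivAt.comp z hu.hasFDerivAt
  simp only [Function.comp_def, ofRealCLM_apply] at hmu hu'
  simp only [dbar, hmu.fderiv, hu'.fderiv, ContinuousLinearMap.comp_apply,
    smul_apply, smul_eq_mul, ofRealCLM_apply, ofReal_mul]
  ring

lemma contDiffAt_normSq_comp (hf : ContDiffAt ℝ 1 f z) :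
    ContDiffAt ℝ 1 (fun w => normSq (f w)) z := by
  simp_rw [normSq_eq_norm_sq]
  exact hf.norm_sq ℝ

lemma dbar_ofReal_normSq_comp (hf : DifferentiableAt ℝ f z) :
    dbar (fun w => (normSq (f w) : ℂ)) z
      = dbar f z * conj' (f z) + f z * dbar (fun w => conj' (f w)) z := by
  simp_rw [← mul_conj]
  exact dbar_mul hf ((conjCLE : ℂ →L[ℝ] ℂ).differentiableAt.comp z hf)

lemma dbar_comp_smul_sub {c : ℝ} {a : ℂ} (hf : Differentiable ℝ f) :
    dbar (fun w => f (c • (w - a))) z = c * dbar f (c • (z - a)) := by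
  have h : HasFDerivAt (fun w => f (c • (w - a)))
      ((fderiv ℝ f (c • (z - a))).comp (c • ContinuousLinearMap.id ℝ ℂ)) z :=
    (hf _).hasFDerivAt.comp z (((hasFDerivAt_id z).sub_const a).const_smul c)
  simp only [dbar, h.fderiv, ContinuousLinearMap.comp_apply, smul_apply,
    ContinuousLinearMap.id_apply, map_smul]
  simp only [real_smul]
  ring

lemma dbar_eq_zero_of_notMem_tsupport (hz : z ∉ tsupport f) : dbar f z = 0 :=
  (dbar_congr (notMem_tsupport_iff_eventuallyEq.mp hz)).trans (dbar_const 0)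

lemma tsupport_dbar_subset : tsupport (dbar f) ⊆ tsupport f :=
  closure_minimal (fun _ hz => not_imp_comm.mp dbar_eq_zero_of_notMem_tsupport hz)
    (isClosed_tsupport f)

lemma hasCompactSupport_dbar (hf : HasCompactSupport f) : HasCompactSupport (dbar f) :=
  hf.mono' (subset_closure.trans tsupport_dbar_subset)

lemma continuous_dbar (hf : ContDiff ℝ 1 f) : Continuous (dbar f) := by
  have h (v : ℂ) : Continuous fun z => fderiv ℝ f z v :=
    (hf.continuous_fderiv one_ne_zero).clm_apply continuous_const
  exact ((h 1).add (continuous_const.mul (h I))).div_const 2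

lemma integrable_dbar (hf : ContDiff ℝ 1 f) (hfc : HasCompactSupport f) : Integrable (dbar f) :=
  (continuous_dbar hf).integrable_of_hasCompactSupport (hasCompactSupport_dbar hfc)

lemma integral_dbar (hf : ContDiff ℝ 1 f) (hfc : HasCompactSupport f) : ∫ z, dbar f z = 0 := by
  have hint (v : ℂ) : Integrable fun z => fderiv ℝ f z v :=
    ((hf.continuous_fderiv one_ne_zero).clm_apply
      continuous_const).integrable_of_hasCompactSupport (hfc.fderiv_apply ℝ v)
  have hzero (v : ℂ) : ∫ z, fderiv ℝ f z v = 0 := by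
    simpa using integral_mul_fderiv_eq_neg_fderiv_mul_of_integrable (μ := (volume : Measure ℂ))
      (f := fun _ => (1 : ℂ)) (g := f) (v := v) (by simp) (by simpa using hint v)
      (by simpa using hf.continuous.integrable_of_hasCompactSupport hfc)
      (fun _ _ => by fun_prop) (fun x _ => hf.differentiable one_ne_zero x)
  simp_rw [dbar]
  rw [integral_div, integral_add (hint 1) ((hint I).const_mul I), integral_const_mul,
    hzero, hzero]
  simp

end Dbar

/-- A smooth step from `0` on `(-∞, 1]` to `1` on `[2, ∞)`. -/
noncomputable def smoothStep (t : ℝ) : ℝ := Real.smoothTransition (t - 1)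

section SmoothStep

variable {t : ℝ}

lemma contDiff_smoothStep : ContDiff ℝ 1 smoothStep :=
  (Real.smoothTransition.contDiff (n := 1)).comp (contDiff_id.sub contDiff_const)

lemma smoothStep_of_le_one (ht : t ≤ 1) : smoothStep t = 0 :=
  Real.smoothTransition.zero_of_nonpos (by linarith)

lemma smoothStep_of_two_le (ht : 2 ≤ t) : smoothStep t = 1 :=
  Real.smoothTransition.one_of_one_le (by linarith)

lemma smoothStep_nonneg : 0 ≤ smoothStep t := Real.smoothTransition.nonneg _

lemma smoothStep_le_one : smoothStep t ≤ 1 := Real.smoothTransition.le_one _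

lemma deriv_smoothStep_nonneg : 0 ≤ deriv smoothStep t :=
  (Real.smoothTransition.monotone.comp
    (fun _ _ h => sub_le_sub_right h 1 : Monotone fun t : ℝ => t - 1)).deriv_nonneg

lemma deriv_smoothStep_of_lt_one (ht : t < 1) : deriv smoothStep t = 0 := by
  have h : smoothStep =ᶠ[𝓝 t] fun _ => 0 := by
    filter_upwards [Iio_mem_nhds ht] with x hx using smoothStep_of_le_one hx.le
  rw [h.deriv_eq, deriv_const]

lemma deriv_smoothStep_of_two_lt (ht : 2 < t) : deriv smoothStep t = 0 := by
  have h : smoothStep =ᶠ[𝓝 t] fun _ => 1 := by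
    filter_upwards [Ioi_mem_nhds ht] with x hx using smoothStep_of_two_le hx.le
  rw [h.deriv_eq, deriv_const]

lemma exists_deriv_smoothStep_mul_le : ∃ M, ∀ t, deriv smoothStep t * t ≤ M := by
  have hcont : Continuous fun t => deriv smoothStep t * t :=
    (contDiff_smoothStep.continuous_deriv le_rfl).mul continuous_id
  have hsupp : HasCompactSupport fun t => deriv smoothStep t * t := by
    refine HasCompactSupport.intro (isCompact_Icc (a := (1 : ℝ)) (b := 2)) fun t ht => ?_
    rcases not_and_or.mp ht with h | h
    · rw [deriv_smoothStep_of_lt_one (not_le.mp h), zero_mul]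
    · rw [deriv_smoothStep_of_two_lt (not_le.mp h), zero_mul]
  obtain ⟨M, hM⟩ := hsupp.exists_bound_of_continuous hcont
  exact ⟨M, fun t => (Real.le_norm_self _).trans (hM t)⟩

end SmoothStep

section TestFunction

variable {φ g : ℂ → ℂ}

lemma continuous_mul_of_tsupport (hφ : Continuous φ) (hg : ∀ z ∈ tsupport φ, ContinuousAt g z) :
    Continuous fun z => φ z * g z :=
  continuous_of_tsupport fun z hz => hφ.continuousAt.mul (hg z (tsupport_mul_subset_left hz))

lemma contDiff_mul_of_tsupport (hφ : ContDiff ℝ 1 φ)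
    (hg : ∀ z ∈ tsupport φ, ContDiffAt ℝ 1 g z) : ContDiff ℝ 1 fun z => φ z * g z :=
  contDiff_iff_contDiffAt.mpr fun z => by
    by_cases hz : z ∈ tsupport φ
    · exact hφ.contDiffAt.mul (hg z hz)
    · refine (contDiffAt_const (c := (0 : ℂ))).congr_of_eventuallyEq ?_
      filter_upwards [notMem_tsupport_iff_eventuallyEq.mp hz] with w hw
      simp [hw]

lemma dbar_mul_of_tsupport (hφ : ContDiff ℝ 1 φ) (hg : ∀ z ∈ tsupport φ, ContDiffAt ℝ 1 g z) :
    dbar (fun z => φ z * g z) = fun z => dbar φ z * g z + φ z * dbar g z := by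
  funext z
  by_cases hz : z ∈ tsupport φ
  · exact dbar_mul (hφ.differentiable one_ne_zero z) ((hg z hz).differentiableAt one_ne_zero)
  · rw [dbar_eq_zero_of_notMem_tsupport fun h => hz (tsupport_mul_subset_left h),
      dbar_eq_zero_of_notMem_tsupport hz, image_eq_zero_of_notMem_tsupport hz]
    ring

lemma integrable_dbar_mul_add_mul_dbar (hφ : ContDiff ℝ 1 φ) (hφc : HasCompactSupport φ)
    (hg : ∀ z ∈ tsupport φ, ContDiffAt ℝ 1 g z) :
    Integrable fun z => dbar φ z * g z + φ z * dbar g z := by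
  rw [← dbar_mul_of_tsupport hφ hg]
  exact integrable_dbar (contDiff_mul_of_tsupport hφ hg) hφc.mul_right

lemma integral_dbar_mul_add_mul_dbar (hφ : ContDiff ℝ 1 φ) (hφc : HasCompactSupport φ)
    (hg : ∀ z ∈ tsupport φ, ContDiffAt ℝ 1 g z) :
    ∫ z, (dbar φ z * g z + φ z * dbar g z) = 0 := by
  rw [← dbar_mul_of_tsupport hφ hg]
  exact integral_dbar (contDiff_mul_of_tsupport hφ hg) hφc.mul_right

end TestFunction

/-- A weak form of holomorphic continuation across an arc along which `f` is the Schwarz function: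
`f` is continuous on `U`, and holomorphic near every point of `U` where it differs from
conjugation. It models a Schwarz function on one side of its curve, continued by conjugation to the
other side. -/
structure IsExtendedSchwarz (f : ℂ → ℂ) (U : Set ℂ) : Prop where
  continuousOn : ContinuousOn f U
  differentiableAt : ∀ z ∈ U, f z ≠ conj' z → DifferentiableAt ℂ f z

/-- The function `f - z̄`, whose zeros are the points at which `f` is the conjugation. -/
noncomputable def conjDefect (f : ℂ → ℂ) (z : ℂ) : ℂ := f z - conj' z

/-- A cutoff vanishing near the zeros of `conjDefect f`; it tends to the indicator function of
`f ≠ z̄` as `κ → ∞`. -/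
noncomputable def truncation (f : ℂ → ℂ) (κ : ℝ) (z : ℂ) : ℝ :=
  smoothStep (κ * normSq (conjDefect f z))

/-- The factor `κ η'(κ |f - z̄|²)`, with `η = smoothStep`, in the derivatives of
`truncation f κ`. -/
noncomputable def truncationSlope (f : ℂ → ℂ) (κ : ℝ) (z : ℂ) : ℝ :=
  κ * deriv smoothStep (κ * normSq (conjDefect f z))

section Truncation

variable {f : ℂ → ℂ} {κ : ℝ} {z : ℂ}

lemma conjDefect_ne_zero_iff : conjDefect f z ≠ 0 ↔ f z ≠ conj' z := sub_ne_zero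

lemma truncation_nonneg : 0 ≤ truncation f κ z := smoothStep_nonneg

lemma truncation_le_one : truncation f κ z ≤ 1 := smoothStep_le_one

lemma truncationSlope_nonneg (hκ : 0 ≤ κ) : 0 ≤ truncationSlope f κ z :=
  mul_nonneg hκ deriv_smoothStep_nonneg

lemma truncation_of_conjDefect_eq_zero (h : conjDefect f z = 0) : truncation f κ z = 0 :=
  smoothStep_of_le_one (by simp [h])

lemma exists_truncationSlope_mul_le :
    ∃ M, ∀ (f : ℂ → ℂ) κ z, truncationSlope f κ z * normSq (conjDefect f z) ≤ M := by
  obtain ⟨M, hM⟩ := exists_deriv_smoothStep_mul_le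
  refine ⟨M, fun f κ z => (hM (κ * normSq (conjDefect f z))).trans_eq' ?_⟩
  rw [truncationSlope]
  ring

lemma eventually_two_lt_mul_normSq (h : conjDefect f z ≠ 0) :
    ∀ᶠ k : ℕ in atTop, 2 < k * normSq (conjDefect f z) :=
  (tendsto_natCast_atTop_atTop.atTop_mul_const (normSq_pos.mpr h)).eventually_gt_atTop 2

lemma eventually_truncation_eq_one (h : conjDefect f z ≠ 0) :
    ∀ᶠ k : ℕ in atTop, truncation f k z = 1 :=
  (eventually_two_lt_mul_normSq h).mono fun _ hk => smoothStep_of_two_le hk.le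

lemma eventually_truncationSlope_eq_zero (h : conjDefect f z ≠ 0) :
    ∀ᶠ k : ℕ in atTop, truncationSlope f k z = 0 :=
  (eventually_two_lt_mul_normSq h).mono fun _ hk => by
    rw [truncationSlope, deriv_smoothStep_of_two_lt hk, mul_zero]

lemma truncation_eventuallyEq_zero (hf : ContinuousAt f z) (h : conjDefect f z = 0) :
    (truncation f κ) =ᶠ[𝓝 z] 0 := by
  have hcont : ContinuousAt (fun w => κ * normSq (conjDefect f w)) z :=
    continuousAt_const.mul
      (continuous_normSq.continuousAt.comp (hf.sub continuous_conj.continuousAt))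
  filter_upwards [hcont.eventually_lt continuousAt_const (by simp [h] : _ < (1 : ℝ))] with w hw
  exact smoothStep_of_le_one hw.le

end Truncation

namespace IsExtendedSchwarz

variable {f Y : ℂ → ℂ} {U : Set ℂ} {κ : ℝ} {z : ℂ}

lemma continuousAt (hf : IsExtendedSchwarz f U) (hU : IsOpen U) (hz : z ∈ U) :
    ContinuousAt f z :=
  hf.continuousOn.continuousAt (hU.mem_nhds hz)

lemma continuousOn_conjDefect (hf : IsExtendedSchwarz f U) : ContinuousOn (conjDefect f) U :=
  hf.continuousOn.sub continuous_conj.continuousOn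

lemma isOpen_setOf_conjDefect_ne_zero (hf : IsExtendedSchwarz f U) (hU : IsOpen U) :
    IsOpen (U ∩ {z | conjDefect f z ≠ 0}) :=
  hf.continuousOn_conjDefect.isOpen_inter_preimage hU isOpen_ne

lemma analyticAt (hf : IsExtendedSchwarz f U) (hU : IsOpen U) (hz : z ∈ U)
    (h : conjDefect f z ≠ 0) : AnalyticAt ℂ f z :=
  DifferentiableOn.analyticAt
    (fun w hw => (hf.differentiableAt w hw.1
      (conjDefect_ne_zero_iff.mp hw.2)).differentiableWithinAt)
    ((hf.isOpen_setOf_conjDefect_ne_zero hU).mem_nhds ⟨hz, h⟩)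

lemma contDiffAt_conjDefect (hf : IsExtendedSchwarz f U) (hU : IsOpen U) (hz : z ∈ U)
    (h : conjDefect f z ≠ 0) : ContDiffAt ℝ 1 (conjDefect f) z :=
  ((hf.analyticAt hU hz h).contDiffAt.restrict_scalars ℝ).sub conjCLE.contDiff.contDiffAt

lemma dbar_conjDefect (hf : IsExtendedSchwarz f U) (hz : z ∈ U) (h : conjDefect f z ≠ 0) :
    dbar (conjDefect f) z = -1 := by
  have hfz := hf.differentiableAt z hz (conjDefect_ne_zero_iff.mp h)
  unfold conjDefect
  rw [dbar_sub (hfz.restrictScalars ℝ) differentiable_conj.differentiableAt, dbar_eq_zero hfz,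
    dbar_conj, zero_sub]

lemma dbar_conj_conjDefect (hf : IsExtendedSchwarz f U) (hz : z ∈ U) (h : conjDefect f z ≠ 0) :
    dbar (fun w => conj' (conjDefect f w)) z = conj' (deriv f z) := by
  have hfz := hf.differentiableAt z hz (conjDefect_ne_zero_iff.mp h)
  simp only [conjDefect, map_sub, conj_conj]
  have hconj : DifferentiableAt ℝ (fun w => conj' (f w)) z :=
    differentiable_conj.differentiableAt.comp z (hfz.restrictScalars ℝ)
  rw [dbar_sub hconj differentiableAt_fun_id,
    dbar_conj_comp hfz, dbar_eq_zero differentiableAt_fun_id, sub_zero]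

lemma contDiffAt_truncation (hf : IsExtendedSchwarz f U) (hU : IsOpen U) (hz : z ∈ U)
    (h : conjDefect f z ≠ 0) : ContDiffAt ℝ 1 (truncation f κ) z :=
  contDiff_smoothStep.contDiffAt.comp z
    (contDiffAt_const.mul (contDiffAt_normSq_comp (hf.contDiffAt_conjDefect hU hz h)))

lemma dbar_truncation (hf : IsExtendedSchwarz f U) (hU : IsOpen U) (hz : z ∈ U)
    (h : conjDefect f z ≠ 0) :
    dbar (fun w => (truncation f κ w : ℂ)) z = truncationSlope f κ z *
      (conjDefect f z * conj' (deriv f z) - conj' (conjDefect f z)) := by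
  have hW := hf.contDiffAt_conjDefect hU hz h
  have hstep : Differentiable ℝ fun t => smoothStep (κ * t) :=
    (contDiff_smoothStep.differentiable one_ne_zero).comp (differentiable_id.const_mul κ)
  unfold truncation
  rw [dbar_ofReal_comp (m := fun t => smoothStep (κ * t)) (hstep _)
      ((contDiffAt_normSq_comp hW).differentiableAt one_ne_zero),
    deriv_comp_mul_left, smul_eq_mul, dbar_ofReal_normSq_comp (hW.differentiableAt one_ne_zero),
    hf.dbar_conjDefect hz h, hf.dbar_conj_conjDefect hz h, truncationSlope]
  push_cast
  ring

lemma contDiffAt_truncation_mul (hf : IsExtendedSchwarz f U) (hU : IsOpen U) (hz : z ∈ U)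
    (hY : conjDefect f z ≠ 0 → ContDiffAt ℝ 1 Y z) :
    ContDiffAt ℝ 1 (fun w => (truncation f κ w : ℂ) * Y w) z := by
  by_cases h : conjDefect f z = 0
  · refine (contDiffAt_const (c := (0 : ℂ))).congr_of_eventuallyEq ?_
    filter_upwards [truncation_eventuallyEq_zero (κ := κ) (hf.continuousAt hU hz) h] with w hw
    simp [hw]
  · exact (ofRealCLM.contDiff.contDiffAt.comp z (hf.contDiffAt_truncation hU hz h)).mul (hY h)

lemma dbar_truncation_mul (hf : IsExtendedSchwarz f U) (hU : IsOpen U) (hz : z ∈ U)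
    (hY : conjDefect f z ≠ 0 → ContDiffAt ℝ 1 Y z) :
    dbar (fun w => (truncation f κ w : ℂ) * Y w) z = truncationSlope f κ z *
      (conjDefect f z * conj' (deriv f z) - conj' (conjDefect f z)) * Y z
      + truncation f κ z * dbar Y z := by
  by_cases h : conjDefect f z = 0
  · have hzero : (fun w => (truncation f κ w : ℂ) * Y w) =ᶠ[𝓝 z] fun _ => 0 := by
      filter_upwards [truncation_eventuallyEq_zero (κ := κ) (hf.continuousAt hU hz) h] with w hw
      simp [hw]
    rw [dbar_congr hzero, dbar_const, h, truncation_of_conjDefect_eq_zero h]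
    simp
  · have htrunc : DifferentiableAt ℝ (fun w => (truncation f κ w : ℂ)) z :=
      ofRealCLM.differentiableAt.comp z
        ((hf.contDiffAt_truncation hU hz h).differentiableAt one_ne_zero)
    rw [dbar_mul htrunc ((hY h).differentiableAt one_ne_zero), hf.dbar_truncation hU hz h]

end IsExtendedSchwarz

lemma integrable_of_tendsto_of_integral_le {α : Type*} [MeasurableSpace α] {μ : Measure α}
    {g : ℕ → α → ℝ} {G : α → ℝ} {C : ℝ} (hint : ∀ n, Integrable (g n) μ)
    (hnonneg : ∀ n x, 0 ≤ g n x) (hC : ∀ n, ∫ x, g n x ∂μ ≤ C)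
    (hlim : ∀ x, Tendsto (fun n => g n x) atTop (𝓝 (G x))) : Integrable G μ := by
  have hnorm (n : ℕ) : eLpNorm (g n) 1 μ ≤ ENNReal.ofReal C := by
    rw [eLpNorm_one_eq_lintegral_enorm, ← ofReal_integral_norm_eq_lintegral_enorm (hint n)]
    refine ENNReal.ofReal_le_ofReal ((hC n).trans' (integral_mono (hint n).norm (hint n) ?_))
    exact fun x => (Real.norm_of_nonneg (hnonneg n x)).le
  refine memLp_one_iff_integrable.mp ⟨aestronglyMeasurable_of_tendsto_ae atTop
    (fun n => (hint n).aestronglyMeasurable) (ae_of_all _ hlim), ?_⟩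
  calc eLpNorm G 1 μ ≤ liminf (fun n => eLpNorm (g n) 1 μ) atTop :=
        Lp.eLpNorm_lim_le_liminf_eLpNorm (fun n => (hint n).aestronglyMeasurable) G
          (ae_of_all _ hlim)
    _ ≤ ENNReal.ofReal C := liminf_le_of_frequently_le' (Frequently.of_forall hnorm)
    _ < ⊤ := ENNReal.ofReal_lt_top

/-- The relation `∂u/∂z̄ = v` on `U` in the sense of distributions, for `u` and `v` locally
integrable on `U`. -/
def HasWeakDbarOn (u v : ℂ → ℂ) (U : Set ℂ) : Prop :=
  ∀ φ : ℂ → ℂ, ContDiff ℝ 1 φ → HasCompactSupport φ → tsupport φ ⊆ U →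
    ∫ z, (dbar φ z * u z + φ z * v z) = 0

lemma energy_inequality {a β M x : ℝ} {w p d : ℂ} (ha : 0 ≤ a) (ha' : a ≤ 1) (hβ : 0 ≤ β)
    (hM : β * normSq w ≤ M) :
    x ^ 2 * (a * normSq p) ≤ 2 * (2 * x * d * (a * (conj' w * p))
      + x ^ 2 * (β * (w * conj' p - conj' w) * (conj' w * p) + a * normSq p)).re
      + (4 * normSq (d * w) + x ^ 2 * (M / 2)) := by
  have hidentity : 2 * (2 * x * d * (a * (conj' w * p))
      + x ^ 2 * (β * (w * conj' p - conj' w) * (conj' w * p) + a * normSq p)).re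
      + (4 * normSq (d * w) + x ^ 2 * (M / 2)) - x ^ 2 * (a * normSq p)
      = a * normSq (x * p + 2 * (conj' d * w)) + 4 * ((1 - a) * normSq (d * w))
        + 2 * (x ^ 2 * (β * normSq (w * conj' p - conj' w / 2)))
        + x ^ 2 / 2 * (M - β * normSq w) := by
    have hx : (x : ℂ) ^ 2 = (x ^ 2 : ℝ) := by push_cast; rfl
    have hhalf (u : ℂ) : u / 2 = (1 / 2 : ℝ) * u := by push_cast; ring
    simp only [hx, hhalf, normSq_apply, add_re, add_im, sub_re, sub_im, mul_re, mul_im, conj_re,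
      conj_im, ofReal_re, ofReal_im, re_ofNat, im_ofNat]
    ring
  have := normSq_nonneg (x * p + 2 * (conj' d * w))
  have := normSq_nonneg (w * conj' p - conj' w / 2)
  have := normSq_nonneg (d * w)
  have := sub_nonneg.mpr ha'
  have := sub_nonneg.mpr hM
  rw [← sub_nonneg, hidentity]
  positivity

namespace IsExtendedSchwarz

variable {f φ : ℂ → ℂ} {χ : ℂ → ℝ} {U : Set ℂ} {κ : ℝ} {z : ℂ}

lemma contDiffAt_deriv (hf : IsExtendedSchwarz f U) (hU : IsOpen U) (hz : z ∈ U)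
    (h : conjDefect f z ≠ 0) : ContDiffAt ℝ 1 (deriv f) z :=
  (hf.analyticAt hU hz h).deriv.contDiffAt.restrict_scalars ℝ

lemma contDiffAt_conj_conjDefect_mul_deriv (hf : IsExtendedSchwarz f U) (hU : IsOpen U)
    (hz : z ∈ U) (h : conjDefect f z ≠ 0) :
    ContDiffAt ℝ 1 (fun w => conj' (conjDefect f w) * deriv f w) z :=
  (conjCLE.contDiff.contDiffAt.comp z (hf.contDiffAt_conjDefect hU hz h)).mul
    (hf.contDiffAt_deriv hU hz h)

lemma dbar_conj_conjDefect_mul_deriv (hf : IsExtendedSchwarz f U) (hU : IsOpen U)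
    (hz : z ∈ U) (h : conjDefect f z ≠ 0) :
    dbar (fun w => conj' (conjDefect f w) * deriv f w) z = normSq (deriv f z) := by
  have hconj : DifferentiableAt ℝ (fun w => conj' (conjDefect f w)) z :=
    differentiable_conj.differentiableAt.comp z
      ((hf.contDiffAt_conjDefect hU hz h).differentiableAt one_ne_zero)
  rw [dbar_mul hconj ((hf.contDiffAt_deriv hU hz h).differentiableAt one_ne_zero),
    hf.dbar_conj_conjDefect hz h, dbar_eq_zero (hf.analyticAt hU hz h).deriv.differentiableAt,
    mul_zero, add_zero, mul_comm, mul_conj]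

lemma continuousAt_truncation_mul_normSq_deriv (hf : IsExtendedSchwarz f U) (hU : IsOpen U)
    (hz : z ∈ U) : ContinuousAt (fun w => truncation f κ w * normSq (deriv f w)) z := by
  have hcont := (hf.contDiffAt_truncation_mul (κ := κ) (Y := fun w => (normSq (deriv f w) : ℂ))
    hU hz fun h => ofRealCLM.contDiff.contDiffAt.comp z
      (contDiffAt_normSq_comp (hf.contDiffAt_deriv hU hz h))).continuousAt
  simpa [Function.comp_def, ← ofReal_mul] using continuous_re.continuousAt.comp hcont

lemma integrable_sq_mul_truncation_mul_normSq_deriv (hf : IsExtendedSchwarz f U) (hU : IsOpen U)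
    (hχ : Continuous χ) (hχc : HasCompactSupport χ) (hχU : tsupport χ ⊆ U) :
    Integrable fun z => χ z ^ 2 * (truncation f κ z * normSq (deriv f z)) := by
  have hcont : Continuous fun z => χ z * (χ z * (truncation f κ z * normSq (deriv f z))) :=
    continuous_of_tsupport fun z hz => hχ.continuousAt.mul (hχ.continuousAt.mul
      (hf.continuousAt_truncation_mul_normSq_deriv hU (hχU (tsupport_mul_subset_left hz))))
  exact (hcont.integrable_of_hasCompactSupport hχc.mul_right).congr
    (ae_of_all _ fun z => by ring)

lemma sq_mul_truncation_mul_normSq_deriv_le {M : ℝ} (hf : IsExtendedSchwarz f U) (hU : IsOpen U)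
    (hχ : ContDiff ℝ 1 χ) (hχU : tsupport χ ⊆ U) (hκ : 0 ≤ κ)
    (hM : truncationSlope f κ z * normSq (conjDefect f z) ≤ M) :
    χ z ^ 2 * (truncation f κ z * normSq (deriv f z)) ≤
      2 * (dbar (fun w => (χ w : ℂ) * χ w) z
          * (truncation f κ z * (conj' (conjDefect f z) * deriv f z))
        + χ z * χ z * dbar (fun w =>
          (truncation f κ w : ℂ) * (conj' (conjDefect f w) * deriv f w)) z).re
      + (4 * normSq (dbar (fun w => (χ w : ℂ)) z * conjDefect f z)
        + χ z ^ 2 * (M / 2)) := by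
  have hdχ : DifferentiableAt ℝ (fun w => (χ w : ℂ)) z :=
    ofRealCLM.differentiableAt.comp z (hχ.differentiable one_ne_zero z)
  rw [dbar_mul hdχ hdχ]
  by_cases hχz : χ z = 0
  · simp only [hχz]
    simpa using mul_nonneg (normSq_nonneg (dbar _ z)) (normSq_nonneg (conjDefect f z))
  have hz : z ∈ U := hχU (subset_tsupport χ hχz)
  have hdbar : (truncation f κ z : ℂ) * dbar (fun w => conj' (conjDefect f w) * deriv f w) z
      = truncation f κ z * normSq (deriv f z) := by
    by_cases h : conjDefect f z = 0
    · simp [truncation_of_conjDefect_eq_zero h]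
    · rw [hf.dbar_conj_conjDefect_mul_deriv hU hz h]
  rw [hf.dbar_truncation_mul hU hz (hf.contDiffAt_conj_conjDefect_mul_deriv hU hz), hdbar]
  convert energy_inequality (d := dbar (fun w => (χ w : ℂ)) z) (p := deriv f z) (x := χ z)
    truncation_nonneg truncation_le_one (truncationSlope_nonneg hκ) hM using 6 <;> ring

lemma continuous_dbar_mul_conjDefect (hf : IsExtendedSchwarz f U) (hU : IsOpen U)
    (hφ : ContDiff ℝ 1 φ) (hφU : tsupport φ ⊆ U) :
    Continuous fun z => dbar φ z * conjDefect f z :=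
  continuous_mul_of_tsupport (continuous_dbar hφ) fun _ hz =>
    hf.continuousOn_conjDefect.continuousAt (hU.mem_nhds (hφU (tsupport_dbar_subset hz)))

lemma integrable_normSq_dbar_mul_conjDefect (hf : IsExtendedSchwarz f U) (hU : IsOpen U)
    (hφ : ContDiff ℝ 1 φ) (hφc : HasCompactSupport φ) (hφU : tsupport φ ⊆ U) :
    Integrable fun z => normSq (dbar φ z * conjDefect f z) := by
  have hsupp : HasCompactSupport fun z => dbar φ z * conjDefect f z :=
    (hasCompactSupport_dbar hφc).mul_right
  exact (continuous_normSq.comp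
    (hf.continuous_dbar_mul_conjDefect hU hφ hφU)).integrable_of_hasCompactSupport
    (hsupp.comp_left (map_zero normSq))

lemma exists_integral_sq_mul_truncation_mul_normSq_deriv_le (hf : IsExtendedSchwarz f U)
    (hU : IsOpen U) (hχ : ContDiff ℝ 1 χ) (hχc : HasCompactSupport χ) (hχU : tsupport χ ⊆ U) :
    ∃ C : ℝ, ∀ κ : ℝ, 0 ≤ κ → ∫ z, χ z ^ 2 * (truncation f κ z * normSq (deriv f z)) ≤ C := by
  obtain ⟨M, hM⟩ := exists_truncationSlope_mul_le
  have hχ' : ContDiff ℝ 1 fun z => (χ z : ℂ) := ofRealCLM.contDiff.comp hχ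
  have hsupp : tsupport (fun z => (χ z : ℂ)) ⊆ tsupport χ :=
    closure_mono fun z hz => by simpa using hz
  have hχc' : HasCompactSupport fun z => (χ z : ℂ) := hχc.mono' (subset_closure.trans hsupp)
  set h : ℂ → ℝ := fun z =>
    4 * normSq (dbar (fun w => (χ w : ℂ)) z * conjDefect f z) + χ z ^ 2 * (M / 2)
  have hsq : Integrable fun z => χ z ^ 2 := by
    simp_rw [sq]
    exact (hχ.continuous.mul hχ.continuous).integrable_of_hasCompactSupport hχc.mul_right
  have hint : Integrable h :=
    ((hf.integrable_normSq_dbar_mul_conjDefect hU hχ' hχc' (hsupp.trans hχU)).const_mul 4).add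
      (hsq.mul_const _)
  refine ⟨∫ z, h z, fun κ hκ => ?_⟩
  have hY (z) (hz : z ∈ tsupport fun w => (χ w : ℂ) * χ w) : ContDiffAt ℝ 1
      (fun w => (truncation f κ w : ℂ) * (conj' (conjDefect f w) * deriv f w)) z := by
    have hzU : z ∈ U := hχU (hsupp (tsupport_mul_subset_left hz))
    exact hf.contDiffAt_truncation_mul hU hzU (hf.contDiffAt_conj_conjDefect_mul_deriv hU hzU)
  obtain ⟨J, hJint, hJzero, hle⟩ : ∃ J : ℂ → ℂ, Integrable J ∧ ∫ z, J z = 0 ∧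
      ∀ z, χ z ^ 2 * (truncation f κ z * normSq (deriv f z)) ≤ 2 * (J z).re + h z :=
    ⟨_, integrable_dbar_mul_add_mul_dbar (hχ'.mul hχ') hχc'.mul_right hY,
      integral_dbar_mul_add_mul_dbar (hχ'.mul hχ') hχc'.mul_right hY,
      fun z => hf.sq_mul_truncation_mul_normSq_deriv_le hU hχ hχU hκ (hM f κ z)⟩
  have hJreint : Integrable fun z => (J z).re := reCLM.integrable_comp hJint
  have hJre : ∫ z, (J z).re = 0 := by
    rw [← zero_re, ← hJzero]
    exact reCLM.integral_comp_comm hJint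
  calc ∫ z, χ z ^ 2 * (truncation f κ z * normSq (deriv f z))
      ≤ ∫ z, (2 * (J z).re + h z) := integral_mono
        (hf.integrable_sq_mul_truncation_mul_normSq_deriv hU hχ.continuous hχc hχU)
        ((hJreint.const_mul 2).add hint) hle
    _ = ∫ z, h z := by
      rw [integral_add (hJreint.const_mul 2) hint, integral_const_mul, hJre, mul_zero, zero_add]

lemma integrable_sq_mul_indicator_normSq_deriv (hf : IsExtendedSchwarz f U) (hU : IsOpen U)
    (hχ : ContDiff ℝ 1 χ) (hχc : HasCompactSupport χ) (hχU : tsupport χ ⊆ U) :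
    Integrable fun z => χ z ^ 2 *
      (U ∩ {w | conjDefect f w ≠ 0}).indicator (fun w => normSq (deriv f w)) z := by
  obtain ⟨C, hC⟩ := hf.exists_integral_sq_mul_truncation_mul_normSq_deriv_le hU hχ hχc hχU
  refine integrable_of_tendsto_of_integral_le
    (g := fun (k : ℕ) z => χ z ^ 2 * (truncation f k z * normSq (deriv f z)))
    (fun k => hf.integrable_sq_mul_truncation_mul_normSq_deriv hU hχ.continuous hχc hχU)
    (fun k z => mul_nonneg (sq_nonneg _) (mul_nonneg truncation_nonneg (normSq_nonneg _)))
    (fun k => hC k k.cast_nonneg) fun z => ?_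
  by_cases hχz : χ z = 0
  · simp [hχz]
  have hz : z ∈ U := hχU (subset_tsupport χ hχz)
  refine tendsto_const_nhds.congr' ?_
  by_cases h : conjDefect f z = 0
  · simp [h, truncation_of_conjDefect_eq_zero h]
  · filter_upwards [eventually_truncation_eq_one h] with k hk
    have hmem : z ∈ U ∩ {w | conjDefect f w ≠ 0} := ⟨hz, h⟩
    rw [hk, one_mul, indicator_of_mem hmem]

lemma locallyIntegrableOn_indicator_deriv (hf : IsExtendedSchwarz f U) (hU : IsOpen U) :
    LocallyIntegrableOn ((U ∩ {w | conjDefect f w ≠ 0}).indicator (deriv f)) U := by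
  intro z hz
  obtain ⟨χ, hχU, hχc, hχ, -, hχz⟩ := exists_contDiff_tsupport_subset (n := 1) (hU.mem_nhds hz)
  have hopen : IsOpen {w | 1 / 2 < χ w} := isOpen_lt continuous_const hχ.continuous
  have hfinite : volume {w | 1 / 2 < χ w} ≠ ⊤ :=
    ((measure_mono fun w (hw : 1 / 2 < χ w) => subset_tsupport χ (by
      simp only [Function.mem_support]; linarith)).trans_lt hχc.measure_lt_top).ne
  have hdom : IntegrableOn (fun w => 1 + 4 * (χ w ^ 2 *
      (U ∩ {w | conjDefect f w ≠ 0}).indicator (fun w => normSq (deriv f w)) w))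
      {w | 1 / 2 < χ w} :=
    (integrableOn_const hfinite).add
      ((hf.integrable_sq_mul_indicator_normSq_deriv hU hχ hχc hχU).const_mul 4).integrableOn
  have hmem : 1 / 2 < χ z := by rw [hχz]; norm_num
  refine ⟨{w | 1 / 2 < χ w}, mem_nhdsWithin_of_mem_nhds (hopen.mem_nhds hmem), hdom.mono' ?_ ?_⟩
  · exact ((measurable_deriv f).indicator
      (hf.isOpen_setOf_conjDefect_ne_zero hU).measurableSet).aestronglyMeasurable
  · filter_upwards [ae_restrict_mem hopen.measurableSet] with w hw
    by_cases hmem : w ∈ U ∩ {w | conjDefect f w ≠ 0}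
    · rw [indicator_of_mem hmem, indicator_of_mem hmem, normSq_eq_norm_sq]
      have : 1 / 2 < χ w := hw
      have hχsq : 1 / 4 ≤ χ w ^ 2 := by nlinarith
      nlinarith [sq_nonneg (‖deriv f w‖ - 1), sq_nonneg ‖deriv f w‖]
    · simp [indicator_of_notMem hmem]

lemma integrable_mul_indicator_deriv (hf : IsExtendedSchwarz f U) (hU : IsOpen U)
    (hφ : Continuous φ) (hφc : HasCompactSupport φ) (hφU : tsupport φ ⊆ U) :
    Integrable fun z => φ z * (U ∩ {w | conjDefect f w ≠ 0}).indicator (deriv f) z :=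
  (integrableOn_iff_integrable_of_support_subset ((Function.support_mul_subset_left φ _).trans
    (subset_tsupport φ))).mp
    (((hf.locallyIntegrableOn_indicator_deriv hU).integrableOn_compact_subset hφU
      hφc).continuousOn_mul hφ.continuousOn hφc)

lemma tendsto_truncation_mul_conjDefect :
    Tendsto (fun k : ℕ => (truncation f k z : ℂ) * conjDefect f z) atTop
      (𝓝 (conjDefect f z)) := by
  by_cases h : conjDefect f z = 0
  · simp [h]
  · refine tendsto_const_nhds.congr' ?_
    filter_upwards [eventually_truncation_eq_one h] with k hk
    rw [hk, ofReal_one, one_mul]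

lemma tendsto_dbar_truncation_mul_conjDefect (hf : IsExtendedSchwarz f U) (hU : IsOpen U)
    (hz : z ∈ U) :
    Tendsto (fun k : ℕ => dbar (fun w => (truncation f k w : ℂ) * conjDefect f w) z) atTop
      (𝓝 (-(U ∩ {w | conjDefect f w ≠ 0}).indicator 1 z)) := by
  refine tendsto_const_nhds.congr' ?_
  by_cases h : conjDefect f z = 0
  · refine Eventually.of_forall fun k => ?_
    simp only [hf.dbar_truncation_mul hU hz (hf.contDiffAt_conjDefect hU hz),
      truncation_of_conjDefect_eq_zero h]
    simp [h]
  · filter_upwards [eventually_truncation_eq_one h, eventually_truncationSlope_eq_zero h]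
      with k hone hzero
    have hmem : z ∈ U ∩ {w | conjDefect f w ≠ 0} := ⟨hz, h⟩
    simp only [hf.dbar_truncation_mul hU hz (hf.contDiffAt_conjDefect hU hz), hone, hzero,
      hf.dbar_conjDefect hz h, indicator_of_mem hmem]
    simp

lemma norm_dbar_truncation_mul_conjDefect_le {M : ℝ} (hf : IsExtendedSchwarz f U) (hU : IsOpen U)
    (hz : z ∈ U) (hκ : 0 ≤ κ) (hM : truncationSlope f κ z * normSq (conjDefect f z) ≤ M) :
    ‖dbar (fun w => (truncation f κ w : ℂ) * conjDefect f w) z‖ ≤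
      M * (‖(U ∩ {w | conjDefect f w ≠ 0}).indicator (deriv f) z‖ + 1) + 1 := by
  have hslope : 0 ≤ truncationSlope f κ z := truncationSlope_nonneg hκ
  have hMnonneg : 0 ≤ M := (mul_nonneg hslope (normSq_nonneg _)).trans hM
  rw [hf.dbar_truncation_mul hU hz (hf.contDiffAt_conjDefect hU hz)]
  by_cases h : conjDefect f z = 0
  · rw [truncation_of_conjDefect_eq_zero h]
    simp only [h, ofReal_zero, zero_mul, mul_zero, add_zero, norm_zero]
    positivity
  have hmem : z ∈ U ∩ {w | conjDefect f w ≠ 0} := ⟨hz, h⟩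
  rw [hf.dbar_conjDefect hz h, indicator_of_mem hmem]
  refine (norm_add_le _ _).trans (add_le_add ?_ ?_)
  · calc ‖truncationSlope f κ z * (conjDefect f z * conj' (deriv f z) - conj' (conjDefect f z))
          * conjDefect f z‖
        ≤ truncationSlope f κ z * (‖conjDefect f z‖ * ‖deriv f z‖ + ‖conjDefect f z‖)
          * ‖conjDefect f z‖ := by
          rw [norm_mul, norm_mul, norm_real, Real.norm_of_nonneg hslope]
          gcongr
          exact (norm_sub_le _ _).trans_eq (by rw [norm_mul, RCLike.norm_conj, RCLike.norm_conj])
      _ = truncationSlope f κ z * normSq (conjDefect f z) * (‖deriv f z‖ + 1) := by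
          rw [normSq_eq_norm_sq]
          ring
      _ ≤ M * (‖deriv f z‖ + 1) := by gcongr
  · rw [norm_mul, norm_neg, norm_one, mul_one, norm_real, Real.norm_of_nonneg truncation_nonneg]
    exact truncation_le_one

lemma integrable_dbar_mul_conjDefect_sub (hf : IsExtendedSchwarz f U) (hU : IsOpen U)
    (hφ : ContDiff ℝ 1 φ) (hφc : HasCompactSupport φ) (hφU : tsupport φ ⊆ U) :
    Integrable fun z => dbar φ z * conjDefect f z
      - φ z * (U ∩ {w | conjDefect f w ≠ 0}).indicator 1 z := by
  have hind : Integrable fun z => φ z * (U ∩ {w | conjDefect f w ≠ 0}).indicator 1 z := by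
    have hφint : Integrable φ := hφ.continuous.integrable_of_hasCompactSupport hφc
    simpa only [← indicator_mul_right, Pi.one_apply, mul_one] using
      hφint.indicator (hf.isOpen_setOf_conjDefect_ne_zero hU).measurableSet
  exact ((hf.continuous_dbar_mul_conjDefect hU hφ hφU).integrable_of_hasCompactSupport
    (hasCompactSupport_dbar hφc).mul_right).sub hind

lemma norm_dbar_mul_truncation_add_le {M : ℝ} (hf : IsExtendedSchwarz f U) (hU : IsOpen U)
    (hφU : tsupport φ ⊆ U) (hκ : 0 ≤ κ)
    (hM : truncationSlope f κ z * normSq (conjDefect f z) ≤ M) :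
    ‖dbar φ z * ((truncation f κ z : ℂ) * conjDefect f z)
        + φ z * dbar (fun w => (truncation f κ w : ℂ) * conjDefect f w) z‖ ≤
      ‖dbar φ z * conjDefect f z‖ + (M * (‖φ z * (U ∩ {w | conjDefect f w ≠ 0}).indicator
        (deriv f) z‖ + ‖φ z‖) + ‖φ z‖) := by
  by_cases hz : z ∈ tsupport φ
  · refine (norm_add_le _ _).trans (add_le_add ?_ ?_)
    · calc ‖dbar φ z * ((truncation f κ z : ℂ) * conjDefect f z)‖
          = truncation f κ z * ‖dbar φ z * conjDefect f z‖ := by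
            rw [mul_left_comm, norm_mul, norm_real, Real.norm_of_nonneg truncation_nonneg]
        _ ≤ ‖dbar φ z * conjDefect f z‖ :=
            mul_le_of_le_one_left (norm_nonneg _) truncation_le_one
    · calc ‖φ z * dbar (fun w => (truncation f κ w : ℂ) * conjDefect f w) z‖
          ≤ ‖φ z‖ * (M * (‖(U ∩ {w | conjDefect f w ≠ 0}).indicator (deriv f) z‖ + 1) + 1) := by
            rw [norm_mul]
            gcongr
            exact hf.norm_dbar_truncation_mul_conjDefect_le hU (hφU hz) hκ hM
        _ = M * (‖φ z * (U ∩ {w | conjDefect f w ≠ 0}).indicator (deriv f) z‖ + ‖φ z‖) + ‖φ z‖ := by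
            rw [norm_mul]
            ring
  · simp [image_eq_zero_of_notMem_tsupport hz, dbar_eq_zero_of_notMem_tsupport hz]

lemma integral_dbar_mul_conjDefect_sub (hf : IsExtendedSchwarz f U) (hU : IsOpen U)
    (hφ : ContDiff ℝ 1 φ) (hφc : HasCompactSupport φ) (hφU : tsupport φ ⊆ U) :
    ∫ z, (dbar φ z * conjDefect f z
      - φ z * (U ∩ {w | conjDefect f w ≠ 0}).indicator 1 z) = 0 := by
  obtain ⟨M, hM⟩ := exists_truncationSlope_mul_le
  set F : ℕ → ℂ → ℂ := fun k z => dbar φ z * ((truncation f k z : ℂ) * conjDefect f z)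
    + φ z * dbar (fun w => (truncation f k w : ℂ) * conjDefect f w) z with hF
  have hW (k : ℕ) (z) (hz : z ∈ tsupport φ) :
      ContDiffAt ℝ 1 (fun w => (truncation f k w : ℂ) * conjDefect f w) z :=
    hf.contDiffAt_truncation_mul hU (hφU hz) (hf.contDiffAt_conjDefect hU (hφU hz))
  have hint (k : ℕ) : ∫ z, F k z = 0 := integral_dbar_mul_add_mul_dbar hφ hφc (hW k)
  set D : Set ℂ := U ∩ {w | conjDefect f w ≠ 0}
  have hφint : Integrable φ := hφ.continuous.integrable_of_hasCompactSupport hφc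
  have hbound : Integrable fun z => ‖dbar φ z * conjDefect f z‖
      + (M * (‖φ z * D.indicator (deriv f) z‖ + ‖φ z‖) + ‖φ z‖) :=
    ((hf.continuous_dbar_mul_conjDefect hU hφ hφU).integrable_of_hasCompactSupport
      (hasCompactSupport_dbar hφc).mul_right).norm.add
      ((((hf.integrable_mul_indicator_deriv hU hφ.continuous hφc hφU).norm.add
        hφint.norm).const_mul M).add hφint.norm)
  have hle (k : ℕ) (z : ℂ) : ‖F k z‖ ≤ ‖dbar φ z * conjDefect f z‖
      + (M * (‖φ z * D.indicator (deriv f) z‖ + ‖φ z‖) + ‖φ z‖) :=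
    hf.norm_dbar_mul_truncation_add_le hU hφU k.cast_nonneg (hM f k z)
  have hlim (z : ℂ) : Tendsto (F · z) atTop
      (𝓝 (dbar φ z * conjDefect f z - φ z * D.indicator 1 z)) := by
    by_cases hz : z ∈ tsupport φ
    · simpa only [mul_neg, ← sub_eq_add_neg] using
        (tendsto_truncation_mul_conjDefect.const_mul (dbar φ z)).add
          ((hf.tendsto_dbar_truncation_mul_conjDefect hU (hφU hz)).const_mul (φ z))
    · simp [hF, image_eq_zero_of_notMem_tsupport hz, dbar_eq_zero_of_notMem_tsupport hz]
  have hlimint := tendsto_integral_of_dominated_convergence _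
    (fun k => (integrable_dbar_mul_add_mul_dbar hφ hφc (hW k)).aestronglyMeasurable) hbound
    (fun k => ae_of_all _ (hle k)) (ae_of_all _ hlim)
  exact tendsto_nhds_unique (hlimint.congr hint) tendsto_const_nhds

/-- Radó's theorem in weak form. -/
theorem hasWeakDbarOn (hf : IsExtendedSchwarz f U) (hU : IsOpen U) :
    HasWeakDbarOn f ((U ∩ {z | f z = conj' z}).indicator 1) U := by
  intro φ hφ hφc hφU
  have hconj (z) (_ : z ∈ tsupport φ) : ContDiffAt ℝ 1 conj' z := conjCLE.contDiff.contDiffAt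
  have hsplit (z : ℂ) : dbar φ z * f z + φ z * (U ∩ {z | f z = conj' z}).indicator 1 z
      = (dbar φ z * conjDefect f z - φ z * (U ∩ {w | conjDefect f w ≠ 0}).indicator 1 z)
        + (dbar φ z * conj' z + φ z * dbar conj' z) := by
    rw [dbar_conj, conjDefect]
    by_cases hz : z ∈ tsupport φ
    · by_cases h : f z = conj' z
      · simp [conjDefect_ne_zero_iff, hφU hz, h]
      · simp [conjDefect_ne_zero_iff, hφU hz, h]
        ring
    · rw [image_eq_zero_of_notMem_tsupport hz, dbar_eq_zero_of_notMem_tsupport hz]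
      ring
  simp_rw [hsplit]
  rw [integral_add (hf.integrable_dbar_mul_conjDefect_sub hU hφ hφc hφU)
    (integrable_dbar_mul_add_mul_dbar hφ hφc hconj),
    hf.integral_dbar_mul_conjDefect_sub hU hφ hφc hφU,
    integral_dbar_mul_add_mul_dbar hφ hφc hconj, add_zero]

end IsExtendedSchwarz

/-- The smooth approximation `w̄ / (1 + |w|²)` of the Cauchy kernel `1 / w`; its rescalings
`c · regKernel (c w)` converge to `1 / w` as `c → ∞`. -/
noncomputable def regKernel (w : ℂ) : ℂ := conj' w * ((1 + normSq w)⁻¹ : ℝ)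

/-- The Cauchy transform `z ↦ ∫ v(w) / (w - z) dA(w)` of a density `v`, without the customary
factor `1 / π`. -/
noncomputable def cauchyTransform (v : ℂ → ℂ) (z : ℂ) : ℂ := ∫ w, v w * (w - z)⁻¹

section RegKernel

lemma one_add_normSq_pos (w : ℂ) : 0 < 1 + normSq w := by
  linarith [normSq_nonneg w]

lemma contDiff_regKernel : ContDiff ℝ 1 regKernel := by
  have hpoly : ContDiff ℝ 1 fun w => 1 + normSq w :=
    contDiff_const.add (contDiff_iff_contDiffAt.mpr fun _ => contDiffAt_normSq_comp contDiffAt_id)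
  exact conjCLE.contDiff.mul
    (ofRealCLM.contDiff.comp (hpoly.inv fun w => (one_add_normSq_pos w).ne'))

lemma norm_regKernel_le (w : ℂ) : ‖regKernel w‖ ≤ 1 := by
  rw [regKernel, norm_mul, RCLike.norm_conj, norm_real, norm_inv,
    Real.norm_of_nonneg (one_add_normSq_pos w).le, ← div_eq_mul_inv,
    div_le_one (one_add_normSq_pos w), normSq_eq_norm_sq]
  nlinarith [sq_nonneg (‖w‖ - 1)]

lemma dbar_regKernel (w : ℂ) : dbar regKernel w = (((1 + normSq w)⁻¹ ^ 2 : ℝ) : ℂ) := by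
  have hpos := one_add_normSq_pos w
  have hnormSq : DifferentiableAt ℝ normSq w :=
    (contDiffAt_normSq_comp contDiffAt_id).differentiableAt one_ne_zero
  have hinv : HasDerivAt (fun t : ℝ => (1 + t)⁻¹) (-1 / (1 + normSq w) ^ 2) (normSq w) :=
    ((hasDerivAt_id _).const_add 1).inv hpos.ne'
  have hcomp : DifferentiableAt ℝ (fun x => (((1 + normSq x)⁻¹ : ℝ) : ℂ)) w :=
    ofRealCLM.differentiableAt.comp w (hinv.differentiableAt.comp w hnormSq)
  have hdbar : dbar (fun x => (normSq x : ℂ)) w = w := by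
    rw [dbar_ofReal_normSq_comp (f := fun x => x) differentiableAt_fun_id,
      dbar_eq_zero differentiableAt_fun_id, dbar_conj]
    ring
  unfold regKernel
  rw [dbar_mul differentiable_conj.differentiableAt hcomp, dbar_conj,
    dbar_ofReal_comp hinv.differentiableAt hnormSq, hinv.deriv, hdbar]
  have hne : (1 + (normSq w : ℂ)) ≠ 0 := mod_cast hpos.ne'
  have hmul : conj' w * w = normSq w := by rw [mul_comm, mul_conj]
  push_cast
  field_simp
  linear_combination -hmul

lemma integrable_inv_sub_regKernel : Integrable fun w => w⁻¹ - regKernel w := by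
  have hradial : Integrable fun w : ℂ => (‖w‖ * (1 + ‖w‖ ^ 2))⁻¹ := by
    refine (integrable_fun_norm_addHaar volume (f := fun y : ℝ => (y * (1 + y ^ 2))⁻¹)).mpr
      ((integrable_inv_one_add_sq.integrableOn (s := Ioi 0)).congr_fun ?_ measurableSet_Ioi)
    intro y hy
    have hy : 0 < y := hy
    simp only [finrank_real_complex, Nat.add_one_sub_one, pow_one, smul_eq_mul]
    field_simp
  refine hradial.mono' (measurable_inv.sub
    contDiff_regKernel.continuous.measurable).aestronglyMeasurable (ae_of_all _ fun w => ?_)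
  by_cases hw : w = 0
  · simp [hw, regKernel]
  have hpos := one_add_normSq_pos w
  have hne : (1 + (normSq w : ℂ)) ≠ 0 := mod_cast hpos.ne'
  have hdiff : w⁻¹ - regKernel w = w⁻¹ * ((1 + normSq w)⁻¹ : ℝ) := by
    have hmul : conj' w * w = normSq w := by rw [mul_comm, mul_conj]
    rw [regKernel]
    push_cast
    field_simp
    linear_combination -hmul
  rw [hdiff, norm_mul, norm_inv, norm_real, norm_inv, Real.norm_of_nonneg hpos.le, mul_inv,
    normSq_eq_norm_sq]

lemma integral_inv_one_add_normSq_sq : ∫ w, (1 + normSq w)⁻¹ ^ 2 = Real.pi := by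
  have hderiv (y : ℝ) :
      HasDerivAt (fun y : ℝ => -(2 * (1 + y ^ 2))⁻¹) (y * ((1 + y ^ 2) ^ 2)⁻¹) y := by
    refine ((((hasDerivAt_pow 2 y).const_add 1).const_mul 2).inv
      (by positivity)).neg.congr_deriv ?_
    push_cast
    field_simp
  have hlim : Tendsto (fun y : ℝ => -(2 * (1 + y ^ 2))⁻¹) atTop (𝓝 0) := by
    rw [← neg_zero]
    exact ((tendsto_const_nhds.add_atTop (tendsto_pow_atTop two_ne_zero)).const_mul_atTop
      two_pos).inv_tendsto_atTop.neg
  have hradial : ∫ y in Ioi (0 : ℝ), y * ((1 + y ^ 2) ^ 2)⁻¹ = 1 / 2 := by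
    rw [integral_Ioi_of_hasDerivAt_of_nonneg' (fun y _ => hderiv y)
      (fun y hy => mul_nonneg (le_of_lt hy) (by positivity)) hlim]
    norm_num
  simp_rw [normSq_eq_norm_sq]
  rw [integral_fun_norm_addHaar volume (fun y : ℝ => (1 + y ^ 2)⁻¹ ^ 2)]
  simp [hradial, Measure.real, Complex.volume_ball]
  ring

end RegKernel

section CauchyTransform

variable {v : ℂ → ℂ} {B c : ℝ} {z : ℂ}

lemma continuous_smul_regKernel_comp : Continuous fun w => c * regKernel (c • (w - z)) :=
  continuous_const.mul
    (contDiff_regKernel.continuous.comp ((continuous_id.sub continuous_const).const_smul c))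

lemma norm_mul_regKernel_comp_le (w : ℂ) : ‖c * regKernel (c • (w - z))‖ ≤ |c| := by
  rw [norm_mul, norm_real, Real.norm_eq_abs]
  exact mul_le_of_le_one_right (abs_nonneg c) (norm_regKernel_le _)

lemma integrable_mul_regKernel_comp (hv : Integrable v) :
    Integrable fun w => v w * (c * regKernel (c • (w - z))) :=
  hv.mul_bdd continuous_smul_regKernel_comp.aestronglyMeasurable
    (ae_of_all _ norm_mul_regKernel_comp_le)

lemma inv_sub_mul_regKernel_comp (hc : c ≠ 0) (w : ℂ) :
    (w - z)⁻¹ - c * regKernel (c • (w - z))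
      = c * ((c • (w - z))⁻¹ - regKernel (c • (w - z))) := by
  have hc' : (c : ℂ) ≠ 0 := ofReal_ne_zero.mpr hc
  rw [mul_sub, real_smul, mul_inv, mul_inv_cancel_left₀ hc']

lemma integrable_inv_sub_mul_regKernel_comp (hc : c ≠ 0) :
    Integrable fun w => (w - z)⁻¹ - c * regKernel (c • (w - z)) := by
  simp_rw [inv_sub_mul_regKernel_comp hc]
  exact ((integrable_inv_sub_regKernel.comp_smul hc).comp_sub_right z).const_mul _

lemma integral_norm_inv_sub_mul_regKernel_comp (hc : 0 < c) :
    ∫ w, ‖(w - z)⁻¹ - c * regKernel (c • (w - z))‖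
      = c⁻¹ * ∫ w : ℂ, ‖w⁻¹ - regKernel w‖ := by
  simp_rw [inv_sub_mul_regKernel_comp hc.ne', norm_mul, norm_real, Real.norm_of_nonneg hc.le]
  rw [integral_const_mul, integral_sub_right_eq_self
    (fun w : ℂ => ‖(c • w)⁻¹ - regKernel (c • w)‖) z,
    Measure.integral_comp_smul_of_nonneg volume (fun w : ℂ => ‖w⁻¹ - regKernel w‖) c
      (hR := hc.le), finrank_real_complex, smul_eq_mul]
  field_simp

lemma integrable_mul_inv_sub_sub (hv : Integrable v) (hB : ∀ w, ‖v w‖ ≤ B) (hc : c ≠ 0) :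
    Integrable fun w => v w * ((w - z)⁻¹ - c * regKernel (c • (w - z))) :=
  (integrable_inv_sub_mul_regKernel_comp hc).bdd_mul hv.aestronglyMeasurable (ae_of_all _ hB)

lemma integrable_mul_inv_sub (hv : Integrable v) (hB : ∀ w, ‖v w‖ ≤ B) :
    Integrable fun w => v w * (w - z)⁻¹ :=
  ((integrable_mul_inv_sub_sub (c := 1) (z := z) hv hB one_ne_zero).add
    (integrable_mul_regKernel_comp (c := 1) (z := z) hv)).congr
    (ae_of_all _ fun w => by simp only [Pi.add_apply]; ring)

lemma cauchyTransform_sub {v' : ℂ → ℂ} {B' : ℝ} (hv : Integrable v) (hB : ∀ w, ‖v w‖ ≤ B)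
    (hv' : Integrable v') (hB' : ∀ w, ‖v' w‖ ≤ B') (z : ℂ) :
    cauchyTransform (v - v') z = cauchyTransform v z - cauchyTransform v' z := by
  simp only [cauchyTransform, Pi.sub_apply, sub_mul]
  exact integral_sub (integrable_mul_inv_sub hv hB) (integrable_mul_inv_sub hv' hB')

lemma norm_cauchyTransform_sub_le (hv : Integrable v) (hB : ∀ w, ‖v w‖ ≤ B) (hc : 0 < c) (z : ℂ) :
    ‖cauchyTransform v z - ∫ w, v w * (c * regKernel (c • (w - z)))‖
      ≤ B * (c⁻¹ * ∫ w : ℂ, ‖w⁻¹ - regKernel w‖) := by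
  rw [cauchyTransform, ← integral_sub (integrable_mul_inv_sub hv hB)
    (integrable_mul_regKernel_comp hv), ← integral_norm_inv_sub_mul_regKernel_comp hc (z := z),
    ← integral_const_mul]
  simp_rw [← mul_sub]
  refine norm_integral_le_of_norm_le
    ((integrable_inv_sub_mul_regKernel_comp hc.ne').norm.const_mul B) (ae_of_all _ fun w => ?_)
  rw [norm_mul]
  exact mul_le_mul_of_nonneg_right (hB w) (norm_nonneg _)

lemma tendstoUniformly_cauchyTransform (hv : Integrable v) (hB : ∀ w, ‖v w‖ ≤ B) :
    TendstoUniformly (fun (c : ℝ) z => ∫ w, v w * (c * regKernel (c • (w - z))))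
      (cauchyTransform v) atTop := by
  have hlim : Tendsto (fun c : ℝ => B * (c⁻¹ * ∫ w : ℂ, ‖w⁻¹ - regKernel w‖)) atTop (𝓝 0) := by
    simpa using (tendsto_inv_atTop_zero.mul_const (∫ w : ℂ, ‖w⁻¹ - regKernel w‖)).const_mul B
  refine Metric.tendstoUniformly_iff.mpr fun ε hε => ?_
  filter_upwards [hlim.eventually_lt_const hε, eventually_gt_atTop 0] with c hlt hc z
  rw [dist_eq_norm]
  exact (norm_cauchyTransform_sub_le hv hB hc z).trans_lt hlt

lemma continuous_cauchyTransform (hv : Integrable v) (hB : ∀ w, ‖v w‖ ≤ B) :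
    Continuous (cauchyTransform v) := by
  refine (tendstoUniformly_cauchyTransform hv hB).continuous (Frequently.of_forall fun c => ?_)
  refine continuous_of_dominated (fun z => (integrable_mul_regKernel_comp hv).aestronglyMeasurable)
    (bound := fun w => ‖v w‖ * |c|) (fun z => ae_of_all _ fun w => ?_) (hv.norm.mul_const _)
    (ae_of_all _ fun w => ?_)
  · rw [norm_mul]
    exact mul_le_mul_of_nonneg_left (norm_mul_regKernel_comp_le w) (norm_nonneg _)
  · exact continuous_const.mul (continuous_const.mul
      (contDiff_regKernel.continuous.comp ((continuous_const.sub continuous_id).const_smul c)))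

lemma differentiableAt_cauchyTransform (hv : Integrable v) (hzero : v =ᶠ[𝓝 z] 0) :
    DifferentiableAt ℂ (cauchyTransform v) z := by
  obtain ⟨ε, hε, hvε⟩ := Metric.eventually_nhds_iff.mp hzero
  have hfar (w ζ) (hw : v w ≠ 0) (hζ : ζ ∈ ball z (ε / 2)) : ε / 2 ≤ ‖w - ζ‖ := by
    have hwz : ε ≤ dist w z := not_lt.mp fun h => hw (hvε h)
    rw [← dist_eq_norm]
    linarith [dist_triangle w ζ z, mem_ball.mp hζ]
  have hbound (n : ℕ) (w ζ) (hζ : ζ ∈ ball z (ε / 2)) :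
      ‖v w * ((w - ζ) ^ n)⁻¹‖ ≤ ‖v w‖ * ((ε / 2) ^ n)⁻¹ := by
    by_cases hw : v w = 0
    · simp [hw]
    · rw [norm_mul, norm_inv, norm_pow]
      have := hfar w ζ hw hζ
      gcongr
  have hmeas (n : ℕ) (ζ : ℂ) : AEStronglyMeasurable fun w => v w * ((w - ζ) ^ n)⁻¹ :=
    hv.aestronglyMeasurable.mul (by fun_prop : Measurable fun w : ℂ =>
      ((w - ζ) ^ n)⁻¹).aestronglyMeasurable
  have hz : z ∈ ball z (ε / 2) := mem_ball_self (by positivity)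
  refine (hasDerivAt_integral_of_dominated_loc_of_deriv_le
    (F' := fun ζ w => v w * ((w - ζ) ^ 2)⁻¹) (bound := fun w => ‖v w‖ * ((ε / 2) ^ 2)⁻¹)
    (isOpen_ball.mem_nhds hz) (Eventually.of_forall fun ζ => by simpa using hmeas 1 ζ) ?_
    (hmeas 2 z) (ae_of_all _ fun w ζ hζ => hbound 2 w ζ hζ) (hv.norm.mul_const _)
    (ae_of_all _ fun w ζ hζ => ?_)).2.differentiableAt
  · exact (hv.norm.mul_const _).mono' (by simpa using hmeas 1 z)
      (ae_of_all _ fun w => by simpa using hbound 1 w z hz)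
  · by_cases hw : v w = 0
    · simpa [hw] using hasDerivAt_const ζ (0 : ℂ)
    · have hne : w - ζ ≠ 0 := norm_pos_iff.mp ((half_pos hε).trans_le (hfar w ζ hw hζ))
      refine ((((hasDerivAt_id ζ).const_sub w).inv hne).const_mul (v w)).congr_deriv ?_
      simp only [id]
      ring

end CauchyTransform

section CauchyPompeiu

variable {u v χ g : ℂ → ℂ} {U : Set ℂ} {B : ℝ} {z : ℂ}

lemma tendsto_integral_inv_one_add_normSq_sq_mul (hg : Integrable g) (hgz : ContinuousAt g z) :
    Tendsto (fun c : ℝ => ∫ w, (c ^ 2 * (1 + normSq (c • (w - z)))⁻¹ ^ 2 : ℝ) * g w) atTop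
      (𝓝 (Real.pi * g z)) := by
  have hdecay : Tendsto (fun w : ℂ => ‖w‖ ^ 2 * (Real.pi⁻¹ * (1 + normSq w)⁻¹ ^ 2))
      (Bornology.cobounded ℂ) (𝓝 0) := by
    have hinv : Tendsto (fun w : ℂ => Real.pi⁻¹ * (‖w‖ ^ 2)⁻¹) (Bornology.cobounded ℂ) (𝓝 0) := by
      simpa using ((tendsto_pow_atTop two_ne_zero).comp
        tendsto_norm_cobounded_atTop).inv_tendsto_atTop.const_mul Real.pi⁻¹
    refine squeeze_zero (fun w => by positivity) (fun w => ?_) hinv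
    rw [mul_left_comm, normSq_eq_norm_sq]
    gcongr
    by_cases hw : w = 0
    · simp [hw]
    have : 0 < ‖w‖ := norm_pos_iff.mpr hw
    rw [inv_pow, ← div_eq_mul_inv, div_le_iff₀ (by positivity), inv_mul_eq_div,
      le_div_iff₀ (by positivity)]
    nlinarith
  have hpeak := tendsto_integral_comp_smul_smul_of_integrable' (μ := (volume : Measure ℂ))
    (φ := fun w => Real.pi⁻¹ * (1 + normSq w)⁻¹ ^ 2) (fun w => by positivity)
    (by rw [integral_const_mul, integral_inv_one_add_normSq_sq, inv_mul_cancel₀ Real.pi_ne_zero])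
    (by simpa only [finrank_real_complex] using hdecay) hg hgz
  refine (hpeak.const_mul (Real.pi : ℂ)).congr fun c => ?_
  rw [← integral_const_mul]
  refine integral_congr_ae (ae_of_all _ fun w => ?_)
  have hpi : (Real.pi : ℂ) ≠ 0 := ofReal_ne_zero.mpr Real.pi_ne_zero
  simp only [finrank_real_complex, real_smul, normSq_mul, ← neg_sub w z, mul_neg, normSq_neg]
  push_cast
  field_simp

lemma dbar_mul_regKernel_comp (c : ℝ) (w : ℂ) :
    dbar (fun x => c * regKernel (c • (x - z))) w
      = (c ^ 2 * (1 + normSq (c • (w - z)))⁻¹ ^ 2 : ℝ) := by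
  have hreg : Differentiable ℝ regKernel := contDiff_regKernel.differentiable one_ne_zero
  have hcomp : Differentiable ℝ fun x => regKernel (c • (x - z)) :=
    hreg.comp ((differentiable_id.sub_const z).const_smul c)
  rw [dbar_mul (differentiableAt_const _) (hcomp w), dbar_const, dbar_comp_smul_sub hreg,
    dbar_regKernel]
  push_cast
  ring

lemma continuous_dbar_mul_of_continuousOn (hU : IsOpen U) (hu : ContinuousOn u U)
    (hχ : ContDiff ℝ 1 χ) (hχU : tsupport χ ⊆ U) : Continuous fun w => dbar χ w * u w :=
  continuous_mul_of_tsupport (continuous_dbar hχ) fun _ hw =>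
    hu.continuousAt (hU.mem_nhds (hχU (tsupport_dbar_subset hw)))

lemma integrable_dbar_mul_add_mul (hU : IsOpen U) (hu : ContinuousOn u U) (hv : Integrable v)
    (hχ : ContDiff ℝ 1 χ) (hχc : HasCompactSupport χ) (hχU : tsupport χ ⊆ U) :
    Integrable fun w => dbar χ w * u w + χ w * v w := by
  obtain ⟨C, hC⟩ := hχc.exists_bound_of_continuous hχ.continuous
  exact ((continuous_dbar_mul_of_continuousOn hU hu hχ hχU).integrable_of_hasCompactSupport
    (hasCompactSupport_dbar hχc).mul_right).add
    (hv.bdd_mul hχ.continuous.aestronglyMeasurable (ae_of_all _ hC))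

lemma exists_norm_dbar_mul_add_mul_le (hU : IsOpen U) (hu : ContinuousOn u U)
    (hB : ∀ w, ‖v w‖ ≤ B) (hχ : ContDiff ℝ 1 χ) (hχc : HasCompactSupport χ)
    (hχU : tsupport χ ⊆ U) : ∃ C, ∀ w, ‖dbar χ w * u w + χ w * v w‖ ≤ C := by
  have hsupp : HasCompactSupport fun w => dbar χ w * u w := (hasCompactSupport_dbar hχc).mul_right
  obtain ⟨C₁, hC₁⟩ := hsupp.exists_bound_of_continuous
    (continuous_dbar_mul_of_continuousOn hU hu hχ hχU)
  obtain ⟨C₂, hC₂⟩ := hχc.exists_bound_of_continuous hχ.continuous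
  refine ⟨C₁ + C₂ * B, fun w => (norm_add_le _ _).trans (add_le_add (hC₁ w) ?_)⟩
  rw [norm_mul]
  exact mul_le_mul (hC₂ w) (hB w) (norm_nonneg _) ((norm_nonneg _).trans (hC₂ w))

namespace HasWeakDbarOn

/-- The Cauchy–Pompeiu formula for `χ u`. -/
theorem pi_mul_add_cauchyTransform (h : HasWeakDbarOn u v U) (hU : IsOpen U)
    (hu : ContinuousOn u U) (hv : Integrable v) (hB : ∀ w, ‖v w‖ ≤ B) (hχ : ContDiff ℝ 1 χ)
    (hχc : HasCompactSupport χ) (hχU : tsupport χ ⊆ U) (z : ℂ) :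
    Real.pi * (χ z * u z) + cauchyTransform (fun w => dbar χ w * u w + χ w * v w) z = 0 := by
  have hρ : Integrable fun w => dbar χ w * u w + χ w * v w :=
    integrable_dbar_mul_add_mul hU hu hv hχ hχc hχU
  obtain ⟨C, hC⟩ := exists_norm_dbar_mul_add_mul_le hU hu hB hχ hχc hχU
  have hχu : Continuous fun w => χ w * u w :=
    continuous_mul_of_tsupport hχ.continuous fun w hw => hu.continuousAt (hU.mem_nhds (hχU hw))
  have hχuint : Integrable fun w => χ w * u w :=
    hχu.integrable_of_hasCompactSupport hχc.mul_right
  -- Test the weak equation with `χ` times the regularised kernel centred at `z`.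
  have htest (c : ℝ) : (∫ w, (c ^ 2 * (1 + normSq (c • (w - z)))⁻¹ ^ 2 : ℝ) * (χ w * u w))
      + ∫ w, (dbar χ w * u w + χ w * v w) * (c * regKernel (c • (w - z))) = 0 := by
    have hkernel : ContDiff ℝ 1 fun w => (c : ℂ) * regKernel (c • (w - z)) :=
      contDiff_const.mul
        (contDiff_regKernel.comp ((contDiff_id.sub contDiff_const).const_smul c))
    have hcont : Continuous fun w => ((c ^ 2 * (1 + normSq (c • (w - z)))⁻¹ ^ 2 : ℝ) : ℂ) := by
      simp_rw [← dbar_mul_regKernel_comp]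
      exact continuous_dbar hkernel
    have hpeak : Integrable fun w =>
        ((c ^ 2 * (1 + normSq (c • (w - z)))⁻¹ ^ 2 : ℝ) : ℂ) * (χ w * u w) :=
      (hcont.mul hχu).integrable_of_hasCompactSupport hχc.mul_right.mul_left
    rw [← integral_add hpeak (integrable_mul_regKernel_comp hρ),
      ← h _ (hχ.mul hkernel) hχc.mul_right ((tsupport_mul_subset_left).trans hχU)]
    refine integral_congr_ae (ae_of_all _ fun w => ?_)
    simp only [dbar_mul (hχ.differentiable one_ne_zero w) (hkernel.differentiable one_ne_zero w),
      dbar_mul_regKernel_comp]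
    ring
  exact tendsto_nhds_unique
    ((tendsto_integral_inv_one_add_normSq_sq_mul hχuint hχu.continuousAt).add
      ((tendstoUniformly_cauchyTransform hρ hC).tendsto_at z))
    (tendsto_const_nhds.congr fun c => (htest c).symm)

/-- Weyl's lemma for `∂/∂z̄`. -/
theorem differentiableAt_pi_mul_add_cauchyTransform (h : HasWeakDbarOn u v U) (hU : IsOpen U)
    (hu : ContinuousOn u U) (hv : Integrable v) (hB : ∀ w, ‖v w‖ ≤ B) (hz : z ∈ U) :
    DifferentiableAt ℂ (fun ζ => Real.pi * u ζ + cauchyTransform v ζ) z := by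
  obtain ⟨ε, hε, hεU⟩ := Metric.nhds_basis_closedBall.mem_iff.mp (hU.mem_nhds hz)
  let bump : ContDiffBump z := ⟨ε / 2, ε, half_pos hε, half_lt_self hε⟩
  set χ : ℂ → ℂ := fun w => (bump w : ℂ)
  have hχ : ContDiff ℝ 1 χ := ofRealCLM.contDiff.comp bump.contDiff
  have hsupp : tsupport χ ⊆ closedBall z ε :=
    bump.tsupport_eq ▸ closure_mono fun w hw => by simpa [χ] using hw
  have hχc : HasCompactSupport χ := (isCompact_closedBall z ε).of_isClosed_subset
    (isClosed_tsupport χ) hsupp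
  have hχone : χ =ᶠ[𝓝 z] fun _ => 1 := bump.eventuallyEq_one.mono fun w hw => by simp [χ, hw]
  set ρ : ℂ → ℂ := fun w => dbar χ w * u w + χ w * v w with hρ_def
  have hρ : Integrable ρ := integrable_dbar_mul_add_mul hU hu hv hχ hχc (hsupp.trans hεU)
  obtain ⟨C, hC⟩ := exists_norm_dbar_mul_add_mul_le hU hu hB hχ hχc (hsupp.trans hεU)
  have hzero : (v - ρ) =ᶠ[𝓝 z] 0 := by
    filter_upwards [hχone.eventuallyEq_nhds] with w hw
    simp [hρ_def, dbar_congr hw, dbar_const, hw.eq_of_nhds]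
  refine (differentiableAt_cauchyTransform (hv.sub hρ) hzero).congr_of_eventuallyEq ?_
  filter_upwards [hχone] with ζ hζ
  have hpompeiu := h.pi_mul_add_cauchyTransform hU hu hv hB hχ hχc (hsupp.trans hεU) ζ
  rw [hζ, one_mul] at hpompeiu
  rw [cauchyTransform_sub hv hB hρ hC]
  linear_combination hpompeiu

end HasWeakDbarOn

end CauchyPompeiu

section Meromorphic

variable {E : Type*} [NormedAddCommGroup E] [NormedSpace ℂ E] [CompleteSpace E] {g : ℂ → E} {a : ℂ}

lemma meromorphicAt_of_isBigO_one (hd : ∀ᶠ z in 𝓝[≠] a, DifferentiableAt ℂ g z)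
    (hb : g =O[𝓝[≠] a] (1 : ℂ → ℂ)) : MeromorphicAt g a := by
  refine ⟨1, analyticAt_of_differentiable_on_punctured_nhds_of_continuousAt ?_ ?_⟩
  · filter_upwards [hd] with z hz
    fun_prop
  · have hzero : Tendsto (fun z => (z - a) ^ 1) (𝓝[≠] a) (𝓝 0) :=
      ((show Continuous fun z : ℂ => (z - a) ^ 1 by fun_prop).tendsto' a 0 (by simp)).mono_left
        nhdsWithin_le_nhds
    rw [continuousAt_iff_punctured_nhds]
    have hsmul := ((isBigO_refl (fun z : ℂ => (z - a) ^ 1) (𝓝[≠] a)).smul hb).trans_tendsto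
      (by simpa only [Pi.one_apply, smul_eq_mul, mul_one] using hzero)
    simpa only [sub_self, pow_one, zero_smul] using hsmul

end Meromorphic

lemma exists_tendsto_of_meromorphicAt_of_frequently_norm_le {𝕜 E : Type*}
    [NontriviallyNormedField 𝕜] [NormedAddCommGroup E] [NormedSpace 𝕜 E] {h : 𝕜 → E} {a : 𝕜} {C : ℝ}
    (hh : MeromorphicAt h a) (hC : ∃ᶠ z in 𝓝[≠] a, ‖h z‖ ≤ C) :
    ∃ l, Tendsto h (𝓝[≠] a) (𝓝 l) := by
  refine tendsto_nhds_of_meromorphicOrderAt_nonneg hh (not_lt.mp fun hneg => ?_)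
  have hpole : Tendsto (fun z => ‖h z‖) (𝓝[≠] a) atTop :=
    tendsto_norm_atTop_iff_cobounded.mpr (tendsto_cobounded_of_meromorphicOrderAt_neg hneg)
  exact hC ((hpole.eventually_gt_atTop C).mono fun _ => not_le_of_gt)

namespace IsExtendedSchwarz

variable {f F : ℂ → ℂ} {U W : Set ℂ} {a : ℂ}

lemma mono (hf : IsExtendedSchwarz f U) (hWU : W ⊆ U) : IsExtendedSchwarz f W where
  continuousOn := hf.continuousOn.mono hWU
  differentiableAt z hz := hf.differentiableAt z (hWU hz)

lemma measurableSet_inter_setOf_eq_conj (hf : IsExtendedSchwarz f U) (hU : IsOpen U) :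
    MeasurableSet (U ∩ {z | f z = conj' z}) := by
  convert hU.measurableSet.diff (hf.isOpen_setOf_conjDefect_ne_zero hU).measurableSet using 1
  ext z
  simp [conjDefect_ne_zero_iff]

lemma exists_continuous_differentiableAt_add_of_isBounded (hf : IsExtendedSchwarz f U)
    (hU : IsOpen U) (hUb : Bornology.IsBounded U) :
    ∃ g : ℂ → ℂ, Continuous g ∧ ∀ z ∈ U, DifferentiableAt ℂ (fun w => f w + g w) z := by
  set v : ℂ → ℂ := (U ∩ {z | f z = conj' z}).indicator 1
  have hv : Integrable v :=
    (integrable_indicator_iff (hf.measurableSet_inter_setOf_eq_conj hU)).mpr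
      (integrableOn_const ((measure_mono inter_subset_left).trans_lt hUb.measure_lt_top).ne)
  have hB (w : ℂ) : ‖v w‖ ≤ 1 := (norm_indicator_le_norm_self _ w).trans_eq norm_one
  refine ⟨fun z => (Real.pi : ℂ)⁻¹ * cauchyTransform v z,
    continuous_const.mul (continuous_cauchyTransform hv hB), fun z hz => ?_⟩
  have hpi : (Real.pi : ℂ) ≠ 0 := ofReal_ne_zero.mpr Real.pi_ne_zero
  have hdiff := ((hf.hasWeakDbarOn hU).differentiableAt_pi_mul_add_cauchyTransform hU
    hf.continuousOn hv hB hz).const_mul (Real.pi : ℂ)⁻¹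
  simpa only [mul_add, inv_mul_cancel_left₀ hpi] using hdiff

lemma exists_continuous_eventually_differentiableAt_add (hf : IsExtendedSchwarz f U)
    (hU : IsOpen U) (ha : U ∈ 𝓝[≠] a) :
    ∃ g : ℂ → ℂ, Continuous g ∧ ∀ᶠ z in 𝓝[≠] a, DifferentiableAt ℂ (fun w => f w + g w) z := by
  have hfa : IsExtendedSchwarz f (U ∩ ball a 1) := hf.mono inter_subset_left
  obtain ⟨g, hg, hfg⟩ := hfa.exists_continuous_differentiableAt_add_of_isBounded
    (hU.inter isOpen_ball) (isBounded_ball.subset inter_subset_right)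
  exact ⟨g, hg, eventually_of_mem
    (inter_mem ha (nhdsWithin_le_nhds (ball_mem_nhds a one_pos))) hfg⟩

theorem tendsto_conj (hf : IsExtendedSchwarz f U) (hU : IsOpen U) (ha : U ∈ 𝓝[≠] a)
    (hconj : ∃ᶠ z in 𝓝[≠] a, f z = conj' z) (hF : AnalyticAt ℂ F a)
    (hF0 : ∀ᶠ z in 𝓝[≠] a, F z ≠ 0) (hb : (fun z => f z * F z) =O[𝓝[≠] a] (1 : ℂ → ℂ)) :
    Tendsto f (𝓝[≠] a) (𝓝 (conj' a)) := by
  obtain ⟨g, hg, hfg⟩ := hf.exists_continuous_eventually_differentiableAt_add hU ha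
  have hga : Tendsto g (𝓝[≠] a) (𝓝 (g a)) := hg.continuousAt.mono_left nhdsWithin_le_nhds
  have hconja : Tendsto conj' (𝓝[≠] a) (𝓝 (conj' a)) :=
    continuous_conj.continuousAt.mono_left nhdsWithin_le_nhds
  have hFa : Tendsto F (𝓝[≠] a) (𝓝 (F a)) := hF.continuousAt.mono_left nhdsWithin_le_nhds
  have hmul : MeromorphicAt (fun z => (f z + g z) * F z) a := by
    refine meromorphicAt_of_isBigO_one ?_ ?_
    · filter_upwards [hfg, nhdsWithin_le_nhds hF.eventually_analyticAt] with z hz hFz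
      exact hz.mul hFz.differentiableAt
    · simpa only [add_mul] using hb.add ((hga.mul hFa).isBigO_one ℂ)
  have hmero : MeromorphicAt (fun z => f z + g z) a :=
    (hmul.div hF.meromorphicAt).congr (hF0.mono fun z hz => mul_div_cancel_right₀ _ hz)
  have hbdd : ∃ᶠ z in 𝓝[≠] a, ‖f z + g z‖ ≤ ‖conj' a + g a‖ + 1 := by
    refine (hconj.and_eventually
      ((hconja.add hga).norm.eventually_le_const (lt_add_one _))).mono fun z hz => ?_
    rw [hz.1]
    exact hz.2
  obtain ⟨l, hl⟩ := exists_tendsto_of_meromorphicAt_of_frequently_norm_le hmero hbdd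
  have hlim : Tendsto f (𝓝[≠] a) (𝓝 (l - g a)) := by simpa using hl.sub hga
  rwa [tendsto_nhds_unique_of_frequently_eq hlim hconja hconj] at hlim

end IsExtendedSchwarz

/-- `f` is a Schwarz function of `Ω`, together with its boundary, on `B`. -/
structure IsSchwarzOn (f : ℂ → ℂ) (Ω B : Set ℂ) : Prop where
  differentiableOn : DifferentiableOn ℂ f (Ω ∩ B)
  continuousOn : ContinuousOn f (closure Ω ∩ B)
  eq_conj : ∀ z ∈ frontier Ω ∩ B, f z = conj' z

section SchwarzFunction

variable {Ω B : Set ℂ} {f F S : ℂ → ℂ} {a : ℂ}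

lemma IsSchwarzOn.isExtendedSchwarz_piecewise [DecidablePred (· ∈ Ω)] (hf : IsSchwarzOn f Ω B)
    (hΩ : IsOpen Ω) (hB : IsOpen B) : IsExtendedSchwarz (Ω.piecewise f conj') B where
  continuousOn := ContinuousOn.piecewise (fun z hz => hf.eq_conj z hz.symm)
    (inter_comm B _ ▸ hf.continuousOn) continuous_conj.continuousOn
  differentiableAt z hz hne := by
    have hzΩ : z ∈ Ω := by
      by_contra h
      exact hne (piecewise_eq_of_notMem _ _ _ h)
    have hmem : Ω ∩ B ∈ 𝓝 z := (hΩ.inter hB).mem_nhds ⟨hzΩ, hz⟩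
    refine (hf.differentiableOn.differentiableAt hmem).congr_of_eventuallyEq ?_
    filter_upwards [hmem] with w hw
    exact piecewise_eq_of_mem _ _ _ hw.1

lemma isSchwarzOn_div (hF : DifferentiableOn ℂ F B) (hF0 : ∀ z ∈ B, F z ≠ 0)
    (hSd : DifferentiableOn ℂ S (Ω ∩ B)) (hSc : ContinuousOn S (closure Ω ∩ B))
    (hS : ∀ z ∈ frontier Ω ∩ B, S z = conj' z * F z) : IsSchwarzOn (fun z => S z / F z) Ω B where
  differentiableOn := hSd.div (hF.mono inter_subset_right) fun z hz => hF0 z hz.2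
  continuousOn := hSc.div (hF.continuousOn.mono inter_subset_right) fun z hz => hF0 z hz.2
  eq_conj z hz := by rw [hS z hz, mul_div_cancel_right₀ _ (hF0 z hz.2)]

lemma isBigO_one_piecewise_mul [DecidablePred (· ∈ Ω)] (hF : ContinuousAt F a)
    (hb : (fun z => f z * F z) =O[𝓝[Ω \ {a}] a] (1 : ℂ → ℂ)) :
    (fun z => Ω.piecewise f conj' z * F z) =O[𝓝[≠] a] (1 : ℂ → ℂ) := by
  have hconj : (fun z => conj' z * F z) =O[𝓝 a] (1 : ℂ → ℂ) :=
    (continuous_conj.continuousAt.mul hF).isBigO_one ℂ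
  rw [← inter_union_sdiff {a}ᶜ Ω, nhdsWithin_union]
  refine IsBigO.sup ((hb.mono (nhdsWithin_mono a fun z hz => ⟨hz.2, hz.1⟩)).congr' ?_ .rfl)
    ((hconj.mono nhdsWithin_le_nhds).congr' ?_ .rfl)
  · filter_upwards [self_mem_nhdsWithin] with z hz
    rw [piecewise_eq_of_mem _ _ _ hz.2]
  · filter_upwards [self_mem_nhdsWithin] with z hz
    rw [piecewise_eq_of_notMem _ _ _ hz.2]

theorem IsSchwarzOn.tendsto_conj (hf : IsSchwarzOn f Ω B) (hΩ : IsOpen Ω) (hB : IsOpen B)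
    (ha : B ∈ 𝓝[≠] a) (hacc : a ∈ closure (frontier Ω \ {a})) (hF : AnalyticAt ℂ F a)
    (hF0 : ∀ᶠ z in 𝓝[≠] a, F z ≠ 0)
    (hb : (fun z => f z * F z) =O[𝓝[Ω \ {a}] a] (1 : ℂ → ℂ)) :
    Tendsto f (𝓝[closure Ω \ {a}] a) (𝓝 (conj' a)) := by
  classical
  have hconj {z : ℂ} (hz : z ∈ frontier Ω) : Ω.piecewise f conj' z = conj' z :=
    piecewise_eq_of_notMem _ _ _ (hΩ.frontier_eq ▸ hz : z ∈ closure Ω \ Ω).2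
  have hlim := (hf.isExtendedSchwarz_piecewise hΩ hB).tendsto_conj hB ha
    ((mem_closure_ne_iff_frequently_within.mp hacc).mono fun z => hconj) hF hF0
    (isBigO_one_piecewise_mul hF.continuousAt hb)
  have hle : 𝓝[closure Ω \ {a}] a ≤ 𝓝[≠] a := nhdsWithin_mono a (sdiff_subset_compl _ _)
  refine (hlim.mono_left hle).congr' ?_
  filter_upwards [hle ha, self_mem_nhdsWithin] with z hzB hz
  by_cases hzΩ : z ∈ Ω
  · exact piecewise_eq_of_mem _ _ _ hzΩ
  · have hzfr : z ∈ frontier Ω := hΩ.frontier_eq ▸ ⟨hz.1, hzΩ⟩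
    rw [hconj hzfr, hf.eq_conj z ⟨hzfr, hzB⟩]

lemma IsSchwarzOn.update_conj (hf : IsSchwarzOn f Ω (B \ {a})) (ha : a ∉ Ω)
    (hlim : Tendsto f (𝓝[closure Ω \ {a}] a) (𝓝 (conj' a))) :
    IsSchwarzOn (Function.update f a (conj' a)) Ω B where
  differentiableOn := by
    have hne {z : ℂ} (hz : z ∈ Ω) : z ≠ a := fun h => ha (h ▸ hz)
    exact (hf.differentiableOn.mono fun z hz => ⟨hz.1, hz.2, hne hz.1⟩).congr
      fun z hz => Function.update_of_ne (hne hz.1) _ _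
  continuousOn := continuousOn_update_iff.mpr
    ⟨inter_sdiff_assoc (closure Ω) B {a} ▸ hf.continuousOn,
      fun _ => hlim.mono_left (nhdsWithin_mono a (sdiff_subset_sdiff_left inter_subset_left))⟩
  eq_conj z hz := by
    by_cases h : z = a
    · rw [h, Function.update_self]
    · rw [Function.update_of_ne h, hf.eq_conj z ⟨hz.1, hz.2, h⟩]

theorem isSchwarzOn_update_div (hΩ : IsOpen Ω) (hB : IsOpen B) (ha : a ∈ B)
    (hacc : a ∈ closure (frontier Ω \ {a})) (hF : DifferentiableOn ℂ F B)
    (hF0 : ∀ z ∈ B \ {a}, F z ≠ 0) (hSd : DifferentiableOn ℂ S (Ω ∩ B))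
    (hSc : ContinuousOn S (closure Ω ∩ B)) (hS : ∀ z ∈ frontier Ω ∩ B, S z = conj' z * F z) :
    IsSchwarzOn (Function.update (fun z => S z / F z) a (conj' a)) Ω B := by
  have hBa : B ∈ 𝓝 a := hB.mem_nhds ha
  have hBa' : B \ {a} ∈ 𝓝[≠] a := sdiff_mem_nhdsWithin_compl hBa {a}
  have hafr : a ∈ frontier Ω := closure_minimal sdiff_subset isClosed_frontier hacc
  have haΩ : a ∈ closure Ω \ Ω := hΩ.frontier_eq ▸ hafr
  have hSb : S =O[𝓝[Ω \ {a}] a] (1 : ℂ → ℂ) :=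
    (((continuousWithinAt_inter hBa).mp (hSc a ⟨haΩ.1, ha⟩)).tendsto.isBigO_one ℂ).mono
      (nhdsWithin_mono a (sdiff_subset.trans subset_closure))
  have hschwarz : IsSchwarzOn (fun z => S z / F z) Ω (B \ {a}) :=
    isSchwarzOn_div (hF.mono sdiff_subset) hF0
      (hSd.mono (inter_subset_inter_right _ sdiff_subset))
      (hSc.mono (inter_subset_inter_right _ sdiff_subset)) fun z hz => hS z ⟨hz.1, hz.2.1⟩
  have hF0a : ∀ᶠ z in 𝓝[≠] a, F z ≠ 0 := eventually_of_mem hBa' hF0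
  refine hschwarz.update_conj haΩ.2 (hschwarz.tendsto_conj hΩ (hB.sdiff isClosed_singleton) hBa'
    hacc (hF.analyticAt hBa) hF0a (hSb.congr' ?_ .rfl))
  filter_upwards [nhdsWithin_mono a (sdiff_subset_compl _ _) hF0a] with z hz
  rw [div_mul_cancel₀ _ hz]

end SchwarzFunction

/-- If `S(ζ) = conj ζ · F(ζ)` on `Γ` with `F` holomorphic near `0`, then
`f = S/F` (with `f(0) = 0`) is a Schwarz function of `Ω ∪ Γ` near `0`. -/
theorem stmt_15 (r : ℝ) (hr : 0 < r) (Ω : Set ℂ) (hΩopen : IsOpen Ω)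
    (hΩsub : Ω ⊆ Metric.ball (0 : ℂ) r)
    (h0 : (0 : ℂ) ∈ frontier Ω)
    (hacc : (0 : ℂ) ∈ closure ((frontier Ω ∩ Metric.ball (0 : ℂ) r) \ {0}))
    (F S : ℂ → ℂ) (V : Set ℂ) (hV : V ∈ nhds (0 : ℂ))
    (hFhol : DifferentiableOn ℂ F V)
    (hFnz : ∃ δ₀ > (0 : ℝ), ∀ z ∈ Metric.closedBall (0 : ℂ) δ₀ \ {0}, F z ≠ 0)
    (hShol : DifferentiableOn ℂ S Ω)
    (hScont : ContinuousOn S (Ω ∪ (frontier Ω ∩ Metric.ball (0 : ℂ) r)))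
    (hSbdd : ∃ M : ℝ, ∀ z ∈ Ω ∪ (frontier Ω ∩ Metric.ball (0 : ℂ) r), ‖S z‖ ≤ M)
    (hSbdry : ∀ ζ ∈ frontier Ω ∩ Metric.ball (0 : ℂ) r, S ζ = conj' ζ * F ζ) :
    ∃ δ > (0 : ℝ),
      (∀ z ∈ Metric.closedBall (0 : ℂ) δ \ {0}, F z ≠ 0) ∧
      DifferentiableOn ℂ (fun z => if z = 0 then 0 else S z / F z)
        (Ω ∩ Metric.ball (0 : ℂ) δ) ∧
      ContinuousOn (fun z => if z = 0 then 0 else S z / F z)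
        ((Ω ∪ (frontier Ω ∩ Metric.ball (0 : ℂ) r)) ∩ Metric.ball (0 : ℂ) δ) ∧
      ∀ ζ ∈ (frontier Ω ∩ Metric.ball (0 : ℂ) r) ∩ Metric.ball (0 : ℂ) δ,
        (if ζ = 0 then 0 else S ζ / F ζ) = conj' ζ := by
  obtain ⟨δ₀, hδ₀, hFδ₀⟩ := hFnz
  obtain ⟨ε, hε, hεV⟩ := Metric.mem_nhds_iff.mp hV
  obtain ⟨δ, hδ, hδmin⟩ := exists_between (lt_min hδ₀ (lt_min hε hr))
  obtain ⟨hδδ₀, hδε, hδr⟩ : δ < δ₀ ∧ δ < ε ∧ δ < r := by simpa only [lt_min_iff] using hδmin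
  have hF0 : ∀ z ∈ closedBall (0 : ℂ) δ \ {0}, F z ≠ 0 := fun z hz =>
    hFδ₀ z ⟨closedBall_subset_closedBall hδδ₀.le hz.1, hz.2⟩
  have hball : ball (0 : ℂ) δ ⊆ ball 0 r := ball_subset_ball hδr.le
  have hΩΓ : (Ω ∪ (frontier Ω ∩ ball 0 r)) ∩ ball 0 δ = closure Ω ∩ ball 0 δ := by
    rw [closure_eq_self_union_frontier, union_inter_distrib_right, union_inter_distrib_right,
      inter_assoc (frontier Ω), inter_eq_right.mpr hball]
  have hf := isSchwarzOn_update_div hΩopen isOpen_ball (mem_ball_self hδ)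
    (closure_mono (sdiff_subset_sdiff_left inter_subset_left) hacc)
    (hFhol.mono ((ball_subset_ball hδε.le).trans hεV))
    (fun z hz => hF0 z ⟨ball_subset_closedBall hz.1, hz.2⟩) (hShol.mono inter_subset_left)
    (hΩΓ ▸ hScont.mono inter_subset_left) fun z hz => hSbdry z ⟨hz.1, hball hz.2⟩
  have hupdate : Function.update (fun z => S z / F z) 0 (conj' 0)
      = fun z => if z = 0 then 0 else S z / F z := by
    funext z
    rw [Function.update_apply, map_zero]
  rw [hupdate] at hf
  exact ⟨δ, hδ, hF0, hf.differentiableOn, hΩΓ ▸ hf.continuousOn,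
    fun ζ hζ => hf.eq_conj ζ ⟨hζ.1.1, hζ.2⟩⟩
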